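/- arXiv:2504.21728 — 2 statements merged into one kernel-verified Lean document; each statement's English description precedes it below -/
import Mathlib

section
/- Let alpha, beta > 0 and C >= 1 be constants and let D be an (alpha,beta)-PDF-bounded distribution. There exists a constant K (depending only on alpha, beta, C) such that for all sufficiently large n, every m >= 10^6 (beta/alpha) C n log n / log log n, and every weight vector (w_1,...,w_n) with w_max/w_min <= C, when the mn utilities u_i(g) are drawn independently from D, the probability that the weighted picking sequence algorithm produces a weighted envy-free (WEF) allocation is at least 1 - K/n. -/
open Finset MeasureTheory
open scoped ENNReal

open Finset

/-- `pickCount picker i s` is the number of picks made by agent `i` among the first `s` steps. -/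
def pickCount {n m : ℕ} (picker : Fin m → Fin n) (i : Fin n) (s : ℕ) : ℕ :=
  (Finset.univ.filter fun s' : Fin m => (s' : ℕ) < s ∧ picker s' = i).card

/-- A run of the weighted picking sequence algorithm (for an arbitrary tie-breaking rule):
at step `s`, agent `picker s` picks item `item s`.  The picking agent must minimize
`t_i / w_i` among all agents, and the picked item must maximize her utility among the
items that have not been picked at earlier steps. -/
structure IsWPSRun {n m : ℕ} (w : Fin n → ℝ) (u : Fin n → Fin m → ℝ)
    (picker : Fin m → Fin n) (item : Fin m → Fin m) : Prop where
  item_inj : Function.Injective item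
  min_ratio : ∀ s : Fin m, ∀ j : Fin n,
    (pickCount picker (picker s) (s : ℕ) : ℝ) / w (picker s)
      ≤ (pickCount picker j (s : ℕ) : ℝ) / w j
  best_item : ∀ s g : Fin m, (∀ s' : Fin m, (s' : ℕ) < (s : ℕ) → item s' ≠ g) →
    u (picker s) g ≤ u (picker s) (item s)

/-- An allocation is a partition of the items into `n` bundles: every item belongs to
exactly one bundle. -/
def IsAllocation {n m : ℕ} (A : Fin n → Finset (Fin m)) : Prop :=
  ∀ g : Fin m, ∃! i : Fin n, g ∈ A i

/-- An allocation `A` is weighted envy-free (WEF) if `u_i(A_i)/w_i ≥ u_i(A_j)/w_j` for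
all agents `i, j`. -/
def IsWEF {n m : ℕ} (w : Fin n → ℝ) (u : Fin n → Fin m → ℝ)
    (A : Fin n → Finset (Fin m)) : Prop :=
  ∀ i j : Fin n, (∑ g ∈ A j, u i g) / w j ≤ (∑ g ∈ A i, u i g) / w i

/-- An allocation `A` is weighted proportional (WPROP) if
`u_i(A_i) ≥ (w_i/W)·u_i(M)` for every agent `i`, where `W` is the sum of the weights. -/
def IsWPROP {n m : ℕ} (w : Fin n → ℝ) (u : Fin n → Fin m → ℝ)
    (A : Fin n → Finset (Fin m)) : Prop :=
  ∀ i : Fin n, w i / (∑ j, w j) * (∑ g, u i g) ≤ ∑ g ∈ A i, u i g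

/-- A probability distribution `D` on `[0,1]` is `(α,β)`-PDF-bounded if it has a density
`f` (with respect to Lebesgue measure restricted to `[0,1]`) satisfying `α ≤ f(x) ≤ β`
for all `x ∈ [0,1]`.  (Such a distribution is in particular non-atomic.) -/
def PDFBounded (α β : ℝ) (D : MeasureTheory.Measure ℝ) : Prop :=
  ∃ f : ℝ → ℝ≥0∞,
    D = (MeasureTheory.volume.restrict (Set.Icc (0:ℝ) 1)).withDensity f ∧
    ∀ x ∈ Set.Icc (0:ℝ) 1, ENNReal.ofReal α ≤ f x ∧ f x ≤ ENNReal.ofReal β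

/-- The joint distribution of the `n·m` utilities `u i g`, drawn independently from `D`. -/
noncomputable def utilMeasure (n m : ℕ) (D : MeasureTheory.Measure ℝ) :
    MeasureTheory.Measure (Fin n → Fin m → ℝ) :=
  MeasureTheory.Measure.pi fun _ : Fin n => MeasureTheory.Measure.pi fun _ : Fin m => D

/-- The bundle received by agent `i` in a run of the weighted picking sequence algorithm. -/
def runBundle {n m : ℕ} (picker : Fin m → Fin n) (item : Fin m → Fin m) (i : Fin n) :
    Finset (Fin m) :=
  (Finset.univ.filter fun s : Fin m => picker s = i).image item

/-- The number of items strictly preferred to `a` under the utilities `x`. -/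
noncomputable def rankOf {m : ℕ} (x : Fin m → ℝ) (a : Fin m) : ℕ :=
  (Finset.univ.filter fun b => x a < x b).card

theorem rankOf_lt {m : ℕ} (x : Fin m → ℝ) (a : Fin m) : rankOf x a < m := by
  have h : (Finset.univ.filter fun b => x a < x b) ⊂ Finset.univ :=
    Finset.filter_ssubset.2 ⟨a, mem_univ _, lt_irrefl _⟩
  simpa [rankOf] using Finset.card_lt_card h

theorem rankOf_le_of_le {m : ℕ} (x : Fin m → ℝ) {a b : Fin m} (h : x a ≤ x b) :
    rankOf x b ≤ rankOf x a :=
  Finset.card_le_card fun c hc => by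
    simp only [mem_filter, mem_univ, true_and] at hc ⊢
    exact h.trans_lt hc

theorem rankOf_lt_of_lt {m : ℕ} (x : Fin m → ℝ) {a b : Fin m} (h : x a < x b) :
    rankOf x b < rankOf x a := by
  refine Finset.card_lt_card ((Finset.ssubset_iff_of_subset ?_).2 ⟨b, by simpa using h, by simp⟩)
  intro c hc
  simp only [mem_filter, mem_univ, true_and] at hc ⊢
  exact h.trans hc

theorem lt_of_rankOf_lt {m : ℕ} (x : Fin m → ℝ) {a b : Fin m} (h : rankOf x a < rankOf x b) :
    x b < x a := by
  by_contra! h'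
  exact absurd (rankOf_le_of_le x h') (by omega)

theorem rankOf_injective {m : ℕ} {x : Fin m → ℝ} (hx : Function.Injective x) :
    Function.Injective (rankOf x) := by
  intro a b h
  by_contra hab
  rcases lt_or_gt_of_ne (fun h' => hab (hx h')) with h' | h'
  · have := rankOf_lt_of_lt x h'; omega
  · have := rankOf_lt_of_lt x h'; omega

theorem exists_rankOf_eq {m : ℕ} {x : Fin m → ℝ} (hx : Function.Injective x) {p : ℕ} (hp : p < m) :
    ∃ a, rankOf x a = p := by
  have hinj : Function.Injective fun a => (⟨rankOf x a, rankOf_lt x a⟩ : Fin m) := fun a b h =>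
    rankOf_injective hx (by simpa using h)
  obtain ⟨a, ha⟩ := (Finite.injective_iff_surjective.1 hinj) ⟨p, hp⟩
  exact ⟨a, by simpa using ha⟩

theorem rankOf_comp_perm {m : ℕ} (x : Fin m → ℝ) (σ : Equiv.Perm (Fin m)) (a : Fin m) :
    rankOf (x ∘ σ) a = rankOf x (σ a) := by
  unfold rankOf
  exact Finset.card_bij (fun b _ => σ b) (by simp) (fun a _ b _ h => σ.injective h)
    (fun b hb => ⟨σ.symm b, by simpa using hb, by simp⟩)

theorem measurable_rankOf {m : ℕ} (a : Fin m) : Measurable fun x : Fin m → ℝ => rankOf x a := by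
  simp only [rankOf, Finset.card_filter]
  refine Finset.measurable_sum _ fun b _ => Measurable.ite ?_ measurable_const measurable_const
  exact measurableSet_lt (measurable_pi_apply a) (measurable_pi_apply b)

theorem measurableSet_injective (m : ℕ) :
    MeasurableSet {x : Fin m → ℝ | Function.Injective x} := by
  have : {x : Fin m → ℝ | Function.Injective x} =
      ⋂ a, ⋂ b, {x : Fin m → ℝ | x a = x b → a = b} := by
    ext x; simp [Function.Injective]
  rw [this]
  refine MeasurableSet.iInter fun a => MeasurableSet.iInter fun b => ?_
  by_cases hab : a = b
  · simp [hab]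
  · simp only [hab, imp_false]
    exact (measurableSet_eq_fun (measurable_pi_apply a) (measurable_pi_apply b)).compl

theorem measurePreserving_comp_perm {m : ℕ} (D : Measure ℝ) [SigmaFinite D]
    (σ : Equiv.Perm (Fin m)) :
    MeasurePreserving (fun x : Fin m → ℝ => x ∘ σ)
      (Measure.pi fun _ : Fin m => D) (Measure.pi fun _ : Fin m => D) := by
  have h := measurePreserving_piCongrLeft (α := fun _ : Fin m => ℝ) (fun _ => D) σ.symm
  convert h using 1
  ext x a
  have := Equiv.piCongrLeft_apply (P := fun _ : Fin m => ℝ) σ.symm x a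
  rw [MeasurableEquiv.coe_piCongrLeft, this]
  simp

theorem div_exp_pow_le_descFactorial (m s : ℕ) (h : s ≤ m) :
    ((m : ℝ) / Real.exp 1) ^ s ≤ (m.descFactorial s : ℝ) := by
  induction s generalizing m with
  | zero => simp
  | succ s ih =>
    obtain ⟨m, rfl⟩ : ∃ k, m = k + 1 := ⟨m - 1, by omega⟩
    have hs : s ≤ m := by omega
    have h1 := ih m hs
    rw [Nat.succ_descFactorial_succ, Nat.cast_mul]
    rcases Nat.eq_zero_or_pos m with rfl | hm
    · obtain rfl : s = 0 := by omega
      have : Real.exp (-1) ≤ 1 := by simp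
      simpa [Real.exp_neg] using this
    have hm' : (0 : ℝ) < m := by exact_mod_cast hm
    have key : ((m : ℝ) + 1) ^ s ≤ Real.exp 1 * (m : ℝ) ^ s := by
      have h2 : (1 + 1 / (m : ℝ)) ^ s ≤ Real.exp 1 := by
        calc (1 + 1 / (m : ℝ)) ^ s ≤ (Real.exp (1 / m)) ^ s := by
              gcongr
              linarith [Real.add_one_le_exp (1 / (m : ℝ))]
          _ = Real.exp (s / m) := by rw [← Real.exp_nat_mul]; congr 1; ring
          _ ≤ Real.exp 1 := by
              apply Real.exp_le_exp.2
              rw [div_le_one hm']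
              exact_mod_cast hs
      calc ((m : ℝ) + 1) ^ s = (1 + 1 / (m : ℝ)) ^ s * (m : ℝ) ^ s := by
            rw [← mul_pow]; congr 1; field_simp
        _ ≤ _ := by gcongr
    have he := Real.exp_pos 1
    calc (((m + 1 : ℕ) : ℝ) / Real.exp 1) ^ (s + 1)
        = ((m : ℝ) + 1) * (((m : ℝ) + 1) ^ s / Real.exp 1 ^ (s + 1)) := by
          push_cast; rw [div_pow, pow_succ]; ring
      _ ≤ ((m : ℝ) + 1) * ((Real.exp 1 * (m : ℝ) ^ s) / Real.exp 1 ^ (s + 1)) := by gcongr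
      _ = ((m : ℝ) + 1) * ((m : ℝ) / Real.exp 1) ^ s := by
          rw [div_pow, pow_succ]; field_simp
      _ ≤ ((m + 1 : ℕ) : ℝ) * (m.descFactorial s : ℝ) := by
          push_cast; gcongr

/-- Under i.i.d. utilities, prescribing which items occupy `s` given ranks has probability at most
`(e / m) ^ s`. -/
theorem measureReal_rankOf_fin_le {m s : ℕ} (D : Measure ℝ) [IsProbabilityMeasure D]
    (p : Fin s → ℕ) (g : Fin s ↪ Fin m) :
    (Measure.pi fun _ : Fin m => D).real
      {x | Function.Injective x ∧ ∀ l, rankOf x (g l) = p l} ≤ (Real.exp 1 / m) ^ s := by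
  set ν := Measure.pi fun _ : Fin m => D with hν
  let A : (Fin s ↪ Fin m) → Set (Fin m → ℝ) := fun g =>
    {x | Function.Injective x ∧ ∀ l, rankOf x (g l) = p l}
  have hmeas : ∀ g, MeasurableSet (A g) := fun g => by
    have : A g = {x | Function.Injective x} ∩ ⋂ l, {x | rankOf x (g l) = p l} := by
      ext x; simp [A]
    rw [this]
    exact (measurableSet_injective m).inter
      (MeasurableSet.iInter fun l => measurable_rankOf (g l) (measurableSet_singleton _))
  have hdisj : Set.PairwiseDisjoint (↑(Finset.univ : Finset (Fin s ↪ Fin m))) A := by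
    intro g _ g' _ hgg
    rw [Function.onFun, Set.disjoint_left]
    rintro x ⟨hx, h1⟩ ⟨_, h2⟩
    exact hgg (Function.Embedding.ext fun l => rankOf_injective hx ((h1 l).trans (h2 l).symm))
  have hsum := sum_measureReal_le_measureReal_univ (μ := ν) (s := Finset.univ)
    (fun g _ => hmeas g) hdisj
  have heq : ∀ g', ν.real (A g') = ν.real (A g) := fun g' => by
    obtain ⟨σ, hσ⟩ := Equiv.Perm.exists_smul_eq_embedding g g'
    have hpre : (fun x : Fin m → ℝ => x ∘ σ) ⁻¹' (A g) = A g' := by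
      ext x
      simp only [A, Set.mem_preimage, Set.mem_ofPred_eq, rankOf_comp_perm, ← hσ]
      refine and_congr ⟨fun h => ?_, fun h => h.comp σ.injective⟩ Iff.rfl
      have := h.comp σ.symm.injective
      simpa [Function.comp_assoc] using this
    rw [← hpre]
    exact (measurePreserving_comp_perm D σ).measureReal_preimage (hmeas g).nullMeasurableSet
  rw [Finset.sum_congr rfl fun g' _ => heq g', Finset.sum_const, Finset.card_univ,
    Fintype.card_embedding_eq, Fintype.card_fin, Fintype.card_fin, nsmul_eq_mul] at hsum
  have hone : ν.real Set.univ = 1 := by simp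
  rw [hone] at hsum
  have hs : s ≤ m := by simpa using Fintype.card_le_of_embedding g
  rcases Nat.eq_zero_or_pos m with rfl | hm
  · obtain rfl : s = 0 := by omega
    simp
  have hd := div_exp_pow_le_descFactorial m s hs
  have hpos : 0 < ((m : ℝ) / Real.exp 1) ^ s := by positivity
  have h3 : ((m : ℝ) / Real.exp 1) ^ s * ν.real (A g) ≤ 1 :=
    (mul_le_mul_of_nonneg_right hd measureReal_nonneg).trans hsum
  calc ν.real (A g) ≤ 1 / ((m : ℝ) / Real.exp 1) ^ s := by
        rw [le_div_iff₀ hpos]; linarith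
    _ = (Real.exp 1 / m) ^ s := by rw [one_div, ← inv_pow, inv_div]

theorem measureReal_rankOf_le {m : ℕ} (D : Measure ℝ) [IsProbabilityMeasure D]
    (P : Finset ℕ) (f : ℕ → Fin m) :
    (Measure.pi fun _ : Fin m => D).real
      {x | Function.Injective x ∧ ∀ p ∈ P, rankOf x (f p) = p} ≤ (Real.exp 1 / m) ^ P.card := by
  by_cases hf : Set.InjOn f P
  · let e := P.equivFin.symm
    have h := measureReal_rankOf_fin_le D (fun l => (e l : ℕ))
      ⟨fun l => f (e l), fun a b hab => e.injective (Subtype.ext (hf (e a).2 (e b).2 hab))⟩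
    refine le_trans (measureReal_mono ?_) h
    rintro x ⟨hx, h⟩
    exact ⟨hx, fun l => h _ (e l).2⟩
  · have : {x : Fin m → ℝ | Function.Injective x ∧ ∀ p ∈ P, rankOf x (f p) = p} = ∅ := by
      rw [Set.eq_empty_iff_forall_notMem]
      rintro x ⟨_, h⟩
      exact hf fun a ha b hb hab => by rw [← h a ha, ← h b hb, hab]
    rw [this]
    simp only [measureReal_empty]
    positivity

instance utilMeasure.instIsProbabilityMeasure (n m : ℕ) (D : Measure ℝ) [IsProbabilityMeasure D] :
    IsProbabilityMeasure (utilMeasure n m D) := by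
  unfold utilMeasure; infer_instance

theorem utilMeasure_real_pi {n m : ℕ} (D : Measure ℝ) [IsProbabilityMeasure D]
    (S : Fin n → Set (Fin m → ℝ)) :
    (utilMeasure n m D).real {u | ∀ k, u k ∈ S k} =
      ∏ k, (Measure.pi fun _ : Fin m => D).real (S k) := by
  have : {u : Fin n → Fin m → ℝ | ∀ k, u k ∈ S k} = Set.univ.pi S := by ext; simp
  rw [this, measureReal_def, utilMeasure, Measure.pi_pi, ENNReal.toReal_prod]
  rfl

/-- The ranks listed for agent `k` in a set `A` of (agent, rank) pairs. -/
def rowRanks {n : ℕ} (A : Finset (Fin n × ℕ)) (k : Fin n) : Finset ℕ :=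
  (A.filter fun q => q.1 = k).image Prod.snd

theorem mem_rowRanks {n : ℕ} {A : Finset (Fin n × ℕ)} {k : Fin n} {p : ℕ} :
    p ∈ rowRanks A k ↔ (k, p) ∈ A := by
  simp [rowRanks]

theorem sum_card_rowRanks {n : ℕ} (A : Finset (Fin n × ℕ)) :
    ∑ k, (rowRanks A k).card = A.card := by
  rw [Finset.card_eq_sum_card_fiberwise (f := Prod.fst) (t := Finset.univ) (fun _ _ => by simp)]
  refine Finset.sum_congr rfl fun k _ => ?_
  refine Finset.card_image_of_injOn ?_
  rintro ⟨a, b⟩ h ⟨a', b'⟩ h' hb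
  simp at h h' hb
  ext <;> simp [h.2, h'.2, hb]

/-- Every (agent, rank) pair `s` in `Src` refers to the same item as the pair `τ s`. -/
def matchEvent {n : ℕ} (m : ℕ) (Src : Finset (Fin n × ℕ)) (τ : Src → Fin n × ℕ) :
    Set (Fin n → Fin m → ℝ) :=
  {u | (∀ k, Function.Injective (u k)) ∧ ∀ s : Src, ∃ a,
    rankOf (u s.1.1) a = s.1.2 ∧ rankOf (u (τ s).1) a = (τ s).2}

theorem measureReal_matchEvent_le {n m : ℕ} (D : Measure ℝ) [IsProbabilityMeasure D]
    (Src : Finset (Fin n × ℕ)) (τ : Src → Fin n × ℕ) (hτ : ∀ s, τ s ∉ Src) :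
    (utilMeasure n m D).real (matchEvent m Src τ) ≤ (Real.exp 1 ^ 2 / m) ^ Src.card := by
  rcases Src.eq_empty_or_nonempty with rfl | ⟨s₀, hs₀⟩
  · simp
  rcases Nat.eq_zero_or_pos m with rfl | hm
  · have : matchEvent 0 Src τ = ∅ := by
      rw [Set.eq_empty_iff_forall_notMem]
      rintro u ⟨_, h⟩
      obtain ⟨a, -⟩ := h ⟨s₀, hs₀⟩
      exact a.elim0
    rw [this, measureReal_empty]; positivity
  classical
  set Tgt : Finset (Fin n × ℕ) := Finset.univ.image τ with hT
  have hTcard : Tgt.card ≤ Src.card :=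
    (Finset.card_image_le (s := Finset.univ) (f := τ)).trans_eq (by simp)
  have hdisj : Disjoint Src Tgt := by
    rw [Finset.disjoint_right]
    intro t ht
    obtain ⟨s, -, rfl⟩ := mem_image.1 ht
    exact hτ s
  have hτT : ∀ s, τ s ∈ Tgt := fun s => mem_image_of_mem _ (mem_univ s)
  let F : (Tgt → Fin m) → Fin n → ℕ → Fin m := fun g k p =>
    if h : (k, p) ∈ Tgt then g ⟨_, h⟩ else
      if h : (k, p) ∈ Src then g ⟨τ ⟨_, h⟩, hτT _⟩ else ⟨0, hm⟩
  let S : (Tgt → Fin m) → Fin n → Set (Fin m → ℝ) := fun g k =>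
    {x | Function.Injective x ∧ ∀ p ∈ rowRanks (Src ∪ Tgt) k, rankOf x (F g k p) = p}
  have hsub : matchEvent m Src τ ⊆
      ⋃ g ∈ (Finset.univ : Finset (Tgt → Fin m)), {u | ∀ k, u k ∈ S g k} := by
    rintro u ⟨hinj, hu⟩
    have hex : ∀ t : Tgt, ∃ a, rankOf (u t.1.1) a = t.1.2 := by
      rintro ⟨t, ht⟩
      obtain ⟨s, -, rfl⟩ := mem_image.1 ht
      obtain ⟨a, -, ha⟩ := hu s
      exact ⟨a, ha⟩
    choose g hg using hex
    simp only [Set.mem_iUnion]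
    refine ⟨g, mem_univ _, fun k => ⟨hinj k, fun p hp => ?_⟩⟩
    rw [mem_rowRanks] at hp
    by_cases hpt : (k, p) ∈ Tgt
    · simp only [F, hpt, dif_pos]
      exact hg ⟨_, hpt⟩
    · have hps : (k, p) ∈ Src := (mem_union.1 hp).resolve_right hpt
      simp only [F, hpt, hps, dif_pos, dif_neg, not_false_eq_true]
      obtain ⟨a, ha, ha'⟩ := hu ⟨_, hps⟩
      have := hg ⟨τ ⟨_, hps⟩, hτT _⟩
      rw [rankOf_injective (hinj _) (this.trans ha'.symm)]
      exact ha
  have hrect : ∀ g, (utilMeasure n m D).real {u | ∀ k, u k ∈ S g k} ≤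
      (Real.exp 1 / m) ^ (Src.card + Tgt.card) := fun g => by
    rw [utilMeasure_real_pi, ← card_union_of_disjoint hdisj, ← sum_card_rowRanks,
      ← Finset.prod_pow_eq_pow_sum]
    exact Finset.prod_le_prod (fun _ _ => measureReal_nonneg)
      fun k _ => measureReal_rankOf_le D _ _
  have hm' : (0 : ℝ) < m := by exact_mod_cast hm
  calc (utilMeasure n m D).real (matchEvent m Src τ)
      ≤ ∑ g : Tgt → Fin m, (utilMeasure n m D).real {u | ∀ k, u k ∈ S g k} :=
        (measureReal_mono hsub (measure_ne_top _ _)).trans (measureReal_biUnion_finset_le _ _)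
    _ ≤ ∑ _g : Tgt → Fin m, (Real.exp 1 / m) ^ (Src.card + Tgt.card) :=
        Finset.sum_le_sum fun g _ => hrect g
    _ = (m : ℝ) ^ Tgt.card * (Real.exp 1 / m) ^ (Src.card + Tgt.card) := by
        simp [Fintype.card_pi]
    _ = Real.exp 1 ^ (Src.card + Tgt.card) / (m : ℝ) ^ Src.card := by
        rw [div_pow, pow_add (m : ℝ)]; field_simp
    _ ≤ Real.exp 1 ^ (2 * Src.card) / (m : ℝ) ^ Src.card := by
        gcongr
        · exact Real.one_le_exp zero_le_one
        · omega
    _ = _ := by rw [pow_mul, div_pow]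

/-- The set of (agent, rank) pairs with prescribed rows. -/
def rankPairs {n : ℕ} (A : Fin n → Finset ℕ) : Finset (Fin n × ℕ) :=
  Finset.univ.biUnion fun k => (A k).image (Prod.mk k)

theorem mem_rankPairs {n : ℕ} {A : Fin n → Finset ℕ} {q : Fin n × ℕ} :
    q ∈ rankPairs A ↔ q.2 ∈ A q.1 := by
  rcases q with ⟨k, p⟩
  simp only [rankPairs, mem_biUnion, mem_univ, true_and, mem_image, Prod.mk.injEq]
  constructor
  · rintro ⟨a, b, hb, rfl, rfl⟩; exact hb
  · intro h; exact ⟨k, p, h, rfl, rfl⟩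

theorem card_rankPairs {n : ℕ} (A : Fin n → Finset ℕ) :
    (rankPairs A).card = ∑ k, (A k).card := by
  rw [← sum_card_rowRanks]
  refine Finset.sum_congr rfl fun k _ => congrArg _ ?_
  ext p; simp [mem_rowRanks, mem_rankPairs]

theorem card_piFinset_le {ι κ γ : Type*} [Fintype ι] [Fintype κ] [DecidableEq ι] [DecidableEq κ]
    (φ : κ → ι) (hφ : Function.Injective φ) (W : ι → Finset γ) (Q T : ℕ)
    (h1 : ∀ k, (W (φ k)).card ≤ Q) (h2 : ∀ s, (∀ k, φ k ≠ s) → (W s).card ≤ T) :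
    (Fintype.piFinset W).card ≤ Q ^ Fintype.card κ * T ^ (Fintype.card ι - Fintype.card κ) := by
  have hcard : (Finset.univ.image φ).card = Fintype.card κ := by
    rw [Finset.card_image_of_injective _ hφ, Finset.card_univ]
  rw [Fintype.card_piFinset, ← Finset.prod_mul_prod_compl (Finset.univ.image φ)]
  refine Nat.mul_le_mul ?_ ?_
  · rw [← hcard]
    refine Finset.prod_le_pow_card _ _ _ fun s hs => ?_
    obtain ⟨k, -, rfl⟩ := mem_image.1 hs
    exact h1 k
  · rw [← hcard, ← Finset.card_compl]
    refine Finset.prod_le_pow_card _ _ _ fun s hs => h2 s fun k hk => ?_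
    simp only [mem_compl, mem_image, mem_univ, true_and, not_exists] at hs
    exact hs k hk

/-- Union bound over the ways `τ` of matching the pairs in `Src` with pairs in `Tg` such that every
agent in `X` is hit by `τ` at a rank in `O k`. -/
theorem measureReal_exists_match_le {n m : ℕ} (D : Measure ℝ) [IsProbabilityMeasure D]
    (Src Tg : Finset (Fin n × ℕ)) (X : Finset (Fin n)) (O : Fin n → Finset ℕ) (Q T : ℕ)
    (hT : 0 < T) (hTg : Tg.card ≤ T) (hO : ∀ k ∈ X, (O k).card ≤ Q) :
    (utilMeasure n m D).real {u | ∃ τ : Src → Fin n × ℕ, (∀ s, τ s ∈ Tg) ∧ (∀ s, τ s ∉ Src) ∧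
      (∀ k ∈ X, ∃ s, (τ s).1 = k ∧ (τ s).2 ∈ O k) ∧ u ∈ matchEvent m Src τ} ≤
    (Src.card : ℝ) ^ X.card * ((Q : ℝ) / T) ^ X.card * (T * (Real.exp 1 ^ 2 / m)) ^ Src.card := by
  classical
  let W : (X → Src) → Src → Finset (Fin n × ℕ) := fun φ s =>
    if h : ∃ k, φ k = s then (O h.choose.1).image (Prod.mk h.choose.1) else Tg
  let I : Finset (X → Src) := Finset.univ.filter Function.Injective
  let V : (X → Src) → Finset (Src → Fin n × ℕ) := fun φ =>
    (Fintype.piFinset (W φ)).filter fun τ => ∀ s, τ s ∉ Src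
  have hW : ∀ φ : X → Src, Function.Injective φ → ∀ k, W φ (φ k) = (O k.1).image (Prod.mk k.1) := by
    intro φ hφ k
    have h : ∃ k', φ k' = φ k := ⟨k, rfl⟩
    simp only [W, dif_pos h, hφ h.choose_spec]
  have hsub : {u | ∃ τ : Src → Fin n × ℕ, (∀ s, τ s ∈ Tg) ∧ (∀ s, τ s ∉ Src) ∧
      (∀ k ∈ X, ∃ s, (τ s).1 = k ∧ (τ s).2 ∈ O k) ∧ u ∈ matchEvent m Src τ} ⊆
      ⋃ φ ∈ I, ⋃ τ ∈ V φ, matchEvent m Src τ := by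
    rintro u ⟨τ, h1, h2, h3, hu⟩
    have h3' : ∀ k : X, ∃ s, (τ s).1 = k ∧ (τ s).2 ∈ O k := fun k => h3 k.1 k.2
    choose φ hφ1 hφ2 using h3'
    have hφ : Function.Injective φ := fun a b hab => by
      apply Subtype.ext
      rw [← hφ1 a, ← hφ1 b, hab]
    simp only [Set.mem_iUnion]
    refine ⟨φ, by simpa [I] using hφ, τ, ?_, hu⟩
    simp only [V, mem_filter, Fintype.mem_piFinset]
    refine ⟨fun s => ?_, h2⟩
    by_cases h : ∃ k, φ k = s
    · obtain ⟨k, rfl⟩ := h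
      rw [hW φ hφ]
      exact mem_image.2 ⟨_, hφ2 k, Prod.ext (hφ1 k).symm rfl⟩
    · simp only [W, dif_neg h]; exact h1 s
  set q := Real.exp 1 ^ 2 / (m : ℝ) with hq
  have hq0 : 0 ≤ q := by positivity
  have hT' : (0 : ℝ) < T := by exact_mod_cast hT
  have hstep : ∀ φ ∈ I, (utilMeasure n m D).real (⋃ τ ∈ V φ, matchEvent m Src τ) ≤
      ((Q : ℝ) / T) ^ X.card * (T * q) ^ Src.card := by
    intro φ hφI
    have hφ : Function.Injective φ := by simpa [I] using hφI
    have hyE : X.card ≤ Src.card := by simpa using Fintype.card_le_of_injective φ hφ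
    have hcard : (V φ).card ≤ Q ^ X.card * T ^ (Src.card - X.card) := by
      refine (Finset.card_filter_le _ _).trans ?_
      have := card_piFinset_le φ hφ (W φ) Q T
        (fun k => by rw [hW φ hφ]; exact Finset.card_image_le.trans (hO k.1 k.2))
        (fun s hs => by
          have h : ¬ ∃ k, φ k = s := by push Not; exact hs
          simp only [W, dif_neg h]; exact hTg)
      simpa using this
    calc (utilMeasure n m D).real (⋃ τ ∈ V φ, matchEvent m Src τ)
        ≤ ∑ τ ∈ V φ, (utilMeasure n m D).real (matchEvent m Src τ) :=
          measureReal_biUnion_finset_le _ _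
      _ ≤ ∑ τ ∈ V φ, q ^ Src.card := Finset.sum_le_sum fun τ hτ =>
          measureReal_matchEvent_le D Src τ (mem_filter.1 hτ).2
      _ = (V φ).card * q ^ Src.card := by simp
      _ ≤ ((Q ^ X.card * T ^ (Src.card - X.card) : ℕ) : ℝ) * q ^ Src.card := by
          gcongr
      _ = _ := by
          obtain ⟨d, hd⟩ : ∃ d, Src.card = d + X.card := ⟨_, (Nat.sub_add_cancel hyE).symm⟩
          clear_value q
          rw [hd, Nat.add_sub_cancel, mul_pow, pow_add (T : ℝ), div_pow]
          push_cast
          field_simp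
  calc _ ≤ (utilMeasure n m D).real (⋃ φ ∈ I, ⋃ τ ∈ V φ, matchEvent m Src τ) :=
        measureReal_mono hsub (measure_ne_top _ _)
    _ ≤ ∑ φ ∈ I, (utilMeasure n m D).real (⋃ τ ∈ V φ, matchEvent m Src τ) :=
        measureReal_biUnion_finset_le _ _
    _ ≤ ∑ _φ ∈ I, ((Q : ℝ) / T) ^ X.card * (T * q) ^ Src.card := Finset.sum_le_sum hstep
    _ = I.card * (((Q : ℝ) / T) ^ X.card * (T * q) ^ Src.card) := by simp
    _ ≤ ((Src.card ^ X.card : ℕ) : ℝ) * (((Q : ℝ) / T) ^ X.card * (T * q) ^ Src.card) := by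
        gcongr
        exact (Finset.card_filter_le _ _).trans (by simp)
    _ = _ := by push_cast; ring

/-- Pairs `⟨b, O⟩` of a depth `b` between `lo` and `hi` and a set `O` of at most `Q` ranks
below `b`. -/
def depthOptions (Q lo hi : ℕ) : Finset (Σ _ : ℕ, Finset ℕ) :=
  (Finset.Icc lo hi).sigma fun b => (Finset.range b).powerset.filter fun O => O.card ≤ Q

theorem mem_depthOptions {Q lo hi : ℕ} {o : Σ _ : ℕ, Finset ℕ} :
    o ∈ depthOptions Q lo hi ↔
      (lo ≤ o.1 ∧ o.1 ≤ hi) ∧ o.2 ⊆ Finset.range o.1 ∧ o.2.card ≤ Q := by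
  simp [depthOptions]

theorem sum_depthOptions_le {Q lo hi : ℕ} (h : 4 * Q ≤ lo) {ρ : ℝ} (h0 : 0 ≤ ρ) (h1 : ρ ≤ 1 / 64) :
    ∑ o ∈ depthOptions Q lo hi, ρ ^ (Finset.range o.1 \ o.2).card ≤
      ∑ b ∈ Finset.Icc lo hi, (1 / 8 : ℝ) ^ b := by
  rw [depthOptions, Finset.sum_sigma]
  refine Finset.sum_le_sum fun b hb => ?_
  have hb' : 4 * Q ≤ b := h.trans (Finset.mem_Icc.1 hb).1
  calc ∑ O ∈ (Finset.range b).powerset.filter (fun O => O.card ≤ Q),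
        ρ ^ (Finset.range b \ O).card
      ≤ ∑ _O ∈ (Finset.range b).powerset.filter (fun O => O.card ≤ Q), (1 / 2 : ℝ) ^ (4 * b) := by
        refine Finset.sum_le_sum fun O hO => ?_
        simp only [mem_filter, mem_powerset] at hO
        have hc : (Finset.range b \ O).card = b - O.card := by
          rw [Finset.card_sdiff_of_subset hO.1, Finset.card_range]
        calc ρ ^ (Finset.range b \ O).card ≤ (1 / 64 : ℝ) ^ (Finset.range b \ O).card := by
              gcongr
          _ = (1 / 2 : ℝ) ^ (6 * (Finset.range b \ O).card) := by
              rw [pow_mul]; norm_num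
          _ ≤ (1 / 2 : ℝ) ^ (4 * b) := by
              refine pow_le_pow_of_le_one (by norm_num) (by norm_num) ?_
              rw [hc]; omega
    _ = ((Finset.range b).powerset.filter (fun O => O.card ≤ Q)).card * (1 / 2 : ℝ) ^ (4 * b) := by
        simp
    _ ≤ ((2 ^ b : ℕ) : ℝ) * (1 / 2 : ℝ) ^ (4 * b) := by
        gcongr
        exact (Finset.card_filter_le _ _).trans (by simp)
    _ = (1 / 8 : ℝ) ^ b := by
        rw [pow_mul]; push_cast; rw [← mul_pow]; norm_num

/-- The depth data of the agents: the root `j` has depth `L`, agents in `X` have depth at least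
`4 * Q`, and no data is recorded for the others. -/
def clusterOptions {n : ℕ} (m Q L : ℕ) (j : Fin n) (X : Finset (Fin n)) (k : Fin n) :
    Finset (Σ _ : ℕ, Finset ℕ) :=
  if k = j then depthOptions Q L L else if k ∈ X then depthOptions Q (4 * Q) m else {⟨0, ∅⟩}

/-- The ranks below the depth of an agent that are not her own picks. -/
def clusterSources {n : ℕ} (c : Fin n → Σ _ : ℕ, Finset ℕ) : Finset (Fin n × ℕ) :=
  rankPairs fun k => Finset.range (c k).1 \ (c k).2

/-- The pairs at which items of a cluster may be picked. -/
def clusterTargets {n : ℕ} (Q : ℕ) (c : Fin n → Σ _ : ℕ, Finset ℕ) : Finset (Fin n × ℕ) :=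
  Finset.univ ×ˢ Finset.range (4 * Q) ∪ rankPairs fun k => (c k).2

/-- There is a cluster of agents around `j` explaining why the `L` best items of `j` are gone. -/
def clusterEvent (n m Q L : ℕ) (j : Fin n) : Set (Fin n → Fin m → ℝ) :=
  {u | ∃ X ∈ (Finset.univ.erase j).powerset, ∃ c ∈ Fintype.piFinset (clusterOptions m Q L j X),
    ∃ τ : clusterSources c → Fin n × ℕ, (∀ s, τ s ∈ clusterTargets Q c) ∧
      (∀ s, τ s ∉ clusterSources c) ∧
      (∀ k ∈ X, ∃ s, (τ s).1 = k ∧ (τ s).2 ∈ (c k).2) ∧ u ∈ matchEvent m (clusterSources c) τ}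

theorem card_snd_le_of_mem_clusterOptions {n m Q L : ℕ} {j : Fin n} {X : Finset (Fin n)}
    {k : Fin n} {o : Σ _ : ℕ, Finset ℕ} (ho : o ∈ clusterOptions m Q L j X k) : o.2.card ≤ Q := by
  unfold clusterOptions at ho
  split_ifs at ho
  · exact (mem_depthOptions.1 ho).2.2
  · exact (mem_depthOptions.1 ho).2.2
  · rw [mem_singleton.1 ho]; simp

theorem sum_powerset_factorial_le (n : ℕ) {ι : Type*} (s : Finset ι) (hs : s.card ≤ n)
    {σ : ℝ} (h0 : 0 ≤ σ) (h1 : σ ≤ 1 / 2) :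
    ∑ X ∈ s.powerset, (X.card.factorial : ℝ) * (1 / n) ^ X.card * σ ^ X.card ≤ 2 := by
  rw [Finset.sum_powerset_apply_card (fun y => (y.factorial : ℝ) * (1 / n) ^ y * σ ^ y)]
  calc ∑ y ∈ Finset.range (s.card + 1), s.card.choose y • ((y.factorial : ℝ) * (1 / n) ^ y * σ ^ y)
      ≤ ∑ y ∈ Finset.range (s.card + 1), (1 / 2 : ℝ) ^ y := by
        refine Finset.sum_le_sum fun y _ => ?_
        have hd : (s.card.choose y * y.factorial : ℕ) ≤ n ^ y := by
          rw [mul_comm, ← Nat.descFactorial_eq_factorial_mul_choose]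
          exact (Nat.descFactorial_le_pow _ _).trans (Nat.pow_le_pow_left hs _)
        have hd' : (s.card.choose y : ℝ) * y.factorial ≤ (n : ℝ) ^ y := by exact_mod_cast hd
        calc s.card.choose y • ((y.factorial : ℝ) * (1 / n) ^ y * σ ^ y)
            = ((s.card.choose y : ℝ) * y.factorial) * ((1 / n) ^ y * σ ^ y) := by
              rw [nsmul_eq_mul]; ring
          _ ≤ (n : ℝ) ^ y * ((1 / n) ^ y * (1 / 2) ^ y) := by gcongr
          _ = ((n : ℝ) * (1 / n)) ^ y * (1 / 2) ^ y := by rw [mul_pow]; ring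
          _ ≤ 1 ^ y * (1 / 2) ^ y := by
              gcongr
              rw [mul_one_div]; exact div_self_le_one _
          _ = _ := by simp
    _ ≤ 2 := by
        rw [Finset.range_eq_Ico]
        refine (geom_sum_Ico_le_of_lt_one (by norm_num) (by norm_num)).trans ?_
        norm_num

theorem measureReal_clusterEvent_le {n m Q L : ℕ} (D : Measure ℝ) [IsProbabilityMeasure D]
    (j : Fin n) (hQ : 0 < Q) (hL : 4 * Q ≤ L)
    (hρ : 5 * Real.exp 1 ^ 3 * (Q * n / m) ≤ 1 / 64) :
    (utilMeasure n m D).real (clusterEvent n m Q L j) ≤ 2 * (1 / 8) ^ L := by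
  have hn : 0 < n := j.pos
  set ρ := 5 * Real.exp 1 ^ 3 * ((Q : ℝ) * n / m) with hρdef
  have hρ0 : 0 ≤ ρ := by positivity
  set T := 5 * Q * n with hT
  have hTpos : 0 < T := by positivity
  have hterm : ∀ X ∈ (Finset.univ.erase j).powerset,
      ∀ c ∈ Fintype.piFinset (clusterOptions m Q L j X),
      (utilMeasure n m D).real {u | ∃ τ : clusterSources c → Fin n × ℕ,
        (∀ s, τ s ∈ clusterTargets Q c) ∧ (∀ s, τ s ∉ clusterSources c) ∧
        (∀ k ∈ X, ∃ s, (τ s).1 = k ∧ (τ s).2 ∈ (c k).2) ∧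
        u ∈ matchEvent m (clusterSources c) τ} ≤
      (X.card.factorial : ℝ) * (1 / n) ^ X.card *
        ∏ k, ρ ^ (Finset.range (c k).1 \ (c k).2).card := by
    intro X hX c hc
    have hcO : ∀ k, (c k).2.card ≤ Q := fun k =>
      card_snd_le_of_mem_clusterOptions (Fintype.mem_piFinset.1 hc k)
    have hTg : (clusterTargets Q c).card ≤ T := by
      refine (Finset.card_union_le _ _).trans ?_
      rw [card_rankPairs, Finset.card_product, Finset.card_univ, Fintype.card_fin, Finset.card_range]
      have : ∑ k, (c k).2.card ≤ n * Q := by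
        simpa using Finset.sum_le_card_nsmul Finset.univ _ Q fun k _ => hcO k
      rw [hT]; nlinarith
    refine (measureReal_exists_match_le D (clusterSources c) (clusterTargets Q c) X
      (fun k => (c k).2) Q T hTpos hTg fun k _ => hcO k).trans ?_
    rw [Finset.prod_pow_eq_pow_sum, ← card_rankPairs]
    change _ ≤ _ * ρ ^ (clusterSources c).card
    set E := (clusterSources c).card
    set y := X.card
    have hE : (E : ℝ) ^ y ≤ y.factorial * Real.exp 1 ^ E := by
      have := Real.pow_div_factorial_le_exp (E : ℝ) (by positivity) y
      rw [div_le_iff₀ (by positivity)] at this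
      rw [← Real.exp_nat_mul, mul_one, mul_comm]
      exact this
    have hQT : (Q : ℝ) / T ≤ 1 / n := by
      have hQ' : (0 : ℝ) < Q := by exact_mod_cast hQ
      have hn' : (0 : ℝ) < n := by exact_mod_cast hn
      rw [hT, div_le_div_iff₀ (by push_cast; positivity) hn']
      push_cast
      nlinarith [mul_pos hQ' hn']
    calc (E : ℝ) ^ y * ((Q : ℝ) / T) ^ y * (T * (Real.exp 1 ^ 2 / m)) ^ E
        ≤ (y.factorial * Real.exp 1 ^ E) * (1 / n) ^ y * (T * (Real.exp 1 ^ 2 / m)) ^ E := by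
          gcongr
      _ = y.factorial * (1 / n) ^ y * (Real.exp 1 * (T * (Real.exp 1 ^ 2 / m))) ^ E := by
          rw [mul_pow (Real.exp 1)]; ring
      _ = _ := by
          congr 2
          rw [hρdef, hT]; push_cast; ring
  set σ := ∑ o ∈ depthOptions Q (4 * Q) m, ρ ^ (Finset.range o.1 \ o.2).card with hσ
  have hσ0 : 0 ≤ σ := Finset.sum_nonneg fun _ _ => by positivity
  have hσ1 : σ ≤ 1 / 2 := by
    refine (sum_depthOptions_le le_rfl hρ0 hρ).trans ?_
    rw [← Finset.Ico_add_one_right_eq_Icc]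
    refine (geom_sum_Ico_le_of_lt_one (by norm_num) (by norm_num)).trans ?_
    have : (1 / 8 : ℝ) ^ (4 * Q) ≤ (1 / 8) ^ 1 :=
      pow_le_pow_of_le_one (by norm_num) (by norm_num) (by omega)
    rw [div_le_iff₀ (by norm_num)]
    linarith
  have hσj : ∑ o ∈ depthOptions Q L L, ρ ^ (Finset.range o.1 \ o.2).card ≤ (1 / 8) ^ L := by
    simpa using sum_depthOptions_le (hi := L) hL hρ0 hρ
  have hX : ∀ X ∈ (Finset.univ.erase j).powerset,
      ∑ c ∈ Fintype.piFinset (clusterOptions m Q L j X),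
        ∏ k, ρ ^ (Finset.range (c k).1 \ (c k).2).card ≤ σ ^ X.card * (1 / 8) ^ L := by
    intro X hX
    have hjX : j ∉ X := fun h => by simpa using mem_powerset.1 hX h
    rw [← Finset.prod_univ_sum (clusterOptions m Q L j X)
      (fun _ o => ρ ^ (Finset.range o.1 \ o.2).card),
      ← Finset.mul_prod_erase _ _ (mem_univ j), mul_comm]
    refine mul_le_mul ?_ (by simpa [clusterOptions] using hσj)
      (Finset.sum_nonneg fun _ _ => by positivity) (by positivity)
    have h1 : ∀ k ∈ Finset.univ.erase j, ∑ o ∈ clusterOptions m Q L j X k,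
        ρ ^ (Finset.range o.1 \ o.2).card = if k ∈ X then σ else 1 := fun k hk => by
      have hkj : k ≠ j := (mem_erase.1 hk).1
      by_cases hkX : k ∈ X <;> simp [clusterOptions, hkj, hkX, hσ]
    rw [Finset.prod_congr rfl h1, Finset.prod_ite_mem, Finset.inter_eq_right.2 (mem_powerset.1 hX),
      Finset.prod_const]
  have hsub : clusterEvent n m Q L j ⊆ ⋃ X ∈ (Finset.univ.erase j).powerset,
      ⋃ c ∈ Fintype.piFinset (clusterOptions m Q L j X),
      {u : Fin n → Fin m → ℝ | ∃ τ : clusterSources c → Fin n × ℕ,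
        (∀ s, τ s ∈ clusterTargets Q c) ∧ (∀ s, τ s ∉ clusterSources c) ∧
        (∀ k ∈ X, ∃ s, (τ s).1 = k ∧ (τ s).2 ∈ (c k).2) ∧
        u ∈ matchEvent m (clusterSources c) τ} := by
    rintro u ⟨X, hX, c, hc, hu⟩
    simp only [Set.mem_iUnion]
    exact ⟨X, hX, c, hc, hu⟩
  refine (measureReal_mono hsub (measure_ne_top _ _)).trans ?_
  refine (measureReal_biUnion_finset_le _ _).trans ?_
  calc _ ≤ ∑ X ∈ (Finset.univ.erase j).powerset,
        ((X.card.factorial : ℝ) * (1 / n) ^ X.card * σ ^ X.card) * (1 / 8) ^ L := by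
        refine Finset.sum_le_sum fun X hX' => ?_
        refine (measureReal_biUnion_finset_le _ _).trans ?_
        refine (Finset.sum_le_sum fun c hc => hterm X hX' c hc).trans ?_
        rw [← Finset.mul_sum, mul_assoc _ (σ ^ X.card)]
        gcongr
        exact hX X hX'
    _ ≤ 2 * (1 / 8) ^ L := by
        rw [← Finset.sum_mul]
        gcongr
        exact sum_powerset_factorial_le n _ (by simp) hσ0 hσ1

theorem pickCount_mono {n m : ℕ} (picker : Fin m → Fin n) (i : Fin n) {s t : ℕ} (h : s ≤ t) :
    pickCount picker i s ≤ pickCount picker i t :=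
  Finset.card_le_card fun s' hs' => by
    simp only [mem_filter, mem_univ, true_and] at hs' ⊢
    exact ⟨hs'.1.trans_le h, hs'.2⟩

theorem IsWPSRun.exists_earlier_of_lt_rankOf {n m : ℕ} {w : Fin n → ℝ} {u : Fin n → Fin m → ℝ}
    {picker : Fin m → Fin n} {item : Fin m → Fin m} (h : IsWPSRun w u picker item)
    (hu : ∀ k, Function.Injective (u k)) {s : Fin m} {p : ℕ}
    (hp : p < rankOf (u (picker s)) (item s)) :
    ∃ s' < s, rankOf (u (picker s)) (item s') = p := by
  obtain ⟨a, ha⟩ := exists_rankOf_eq (hu (picker s)) (hp.trans (rankOf_lt _ _))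
  have hlt : u (picker s) (item s) < u (picker s) a := lt_of_rankOf_lt _ (by omega)
  by_contra! hno
  refine absurd (h.best_item s a fun s' hs' hs'a => ?_) (not_le.2 hlt)
  exact hno s' hs' (by rw [hs'a, ha])

/-- If some agent has to pick outside her `L` best items although nobody has made more than `Q`
picks, then the utilities contain a cluster. -/
theorem IsWPSRun.exists_mem_clusterEvent {n m : ℕ} {w : Fin n → ℝ} {u : Fin n → Fin m → ℝ}
    {picker : Fin m → Fin n} {item : Fin m → Fin m} (h : IsWPSRun w u picker item)
    (hu : ∀ k, Function.Injective (u k)) {Q L : ℕ} {s₀ : Fin m}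
    (hcount : ∀ k, pickCount picker k s₀ ≤ Q) (hrank : L ≤ rankOf (u (picker s₀)) (item s₀)) :
    ∃ j, u ∈ clusterEvent n m Q L j := by
  classical
  obtain ⟨s₁, hs₁, hmin⟩ := wellFounded_lt.has_min
    {s : Fin m | L ≤ rankOf (u (picker s)) (item s)} ⟨s₀, hrank⟩
  have hs₁ : L ≤ rankOf (u (picker s₁)) (item s₁) := hs₁
  have hmin : ∀ s < s₁, rankOf (u (picker s)) (item s) < L := fun s hs => by
    by_contra! hL
    exact hmin s hL hs
  have hle : s₁ ≤ s₀ := by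
    by_contra! hlt
    exact absurd (hmin _ hlt) (not_lt.2 hrank)
  have hcount : ∀ k, pickCount picker k s₁ ≤ Q := fun k =>
    (pickCount_mono picker k hle).trans (hcount k)
  set j := picker s₁ with hj
  let rk : Fin m → ℕ := fun s => rankOf (u (picker s)) (item s)
  let picks : Fin n → Finset ℕ := fun k =>
    (Finset.univ.filter fun s : Fin m => s < s₁ ∧ picker s = k).image rk
  have hpicks : ∀ s < s₁, rk s ∈ picks (picker s) := fun s hs =>
    mem_image.2 ⟨s, by simp [hs], rfl⟩
  have hpicks_card : ∀ k, (picks k).card ≤ Q := fun k => Finset.card_image_le.trans (hcount k)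
  let dep : Fin n → ℕ := fun k => (picks k).sup (· + 1)
  have hpicks_dep : ∀ k, ∀ p ∈ picks k, p < dep k := fun k p hp =>
    Nat.lt_of_succ_le (Finset.le_sup (f := (· + 1)) hp)
  have hdep : ∀ k, dep k ≤ m := fun k => Finset.sup_le fun p hp => by
    obtain ⟨s, -, rfl⟩ := mem_image.1 hp
    exact rankOf_lt _ _
  have htaken : ∀ k, ∀ p < dep k, p ∉ picks k → ∃ s < s₁, rankOf (u k) (item s) = p := by
    intro k p hp hpk
    obtain ⟨r, hr, hpr⟩ := (Finset.lt_sup_iff (f := (· + 1))).1 hp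
    obtain ⟨s, hs, rfl⟩ := mem_image.1 hr
    simp only [mem_filter, mem_univ, true_and] at hs
    obtain ⟨hs, rfl⟩ := hs
    have hne : p ≠ rk s := fun h' => hpk (h' ▸ hr)
    obtain ⟨s', hs', h'⟩ := h.exists_earlier_of_lt_rankOf hu (s := s) (p := p)
      (by change p < rk s; omega)
    exact ⟨s', hs'.trans hs, h'⟩
  have htaken_j : ∀ p < L, ∃ s < s₁, rankOf (u j) (item s) = p := fun p hp =>
    h.exists_earlier_of_lt_rankOf hu (hp.trans_le hs₁)
  let cfg : Finset (Fin n) → Fin n → Σ _ : ℕ, Finset ℕ := fun X k =>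
    if k = j then ⟨L, picks j⟩ else if k ∈ X then ⟨dep k, picks k⟩ else ⟨0, ∅⟩
  let X₀ : Finset (Fin n) := Finset.univ.filter fun k => k ≠ j ∧ 4 * Q < dep k
  let P : Finset (Fin n) → Prop := fun X => ∀ q ∈ clusterSources (cfg X), ∀ s < s₁,
    rankOf (u q.1) (item s) = q.2 → rk s < 4 * Q ∨ picker s = j ∨ picker s ∈ X
  have hP₀ : P X₀ := fun q _ s hs _ => by
    by_contra! hcon
    refine hcon.2.2 (mem_filter.2 ⟨mem_univ _, hcon.2.1, ?_⟩)
    exact hcon.1.trans_lt (hpicks_dep _ _ (hpicks s hs))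
  obtain ⟨X, hXX₀, hXmin⟩ := exists_minimal_le_of_wellFoundedLT P X₀ hP₀
  have hjX : ∀ k ∈ X, k ≠ j ∧ 4 * Q < dep k := fun k hk => by simpa [X₀] using hXX₀ hk
  have hcfg : ∀ X' k, k = j ∨ k ∈ X' → (cfg X' k).2 = picks k := by
    intro X' k hk
    by_cases hkj : k = j
    · simp [cfg, hkj]
    · simp [cfg, hkj, hk.resolve_left hkj]
  have hsource : ∀ q : clusterSources (cfg X), ∃ s < s₁, rankOf (u q.1.1) (item s) = q.1.2 := by
    rintro ⟨⟨k, p⟩, hq⟩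
    rw [clusterSources, mem_rankPairs] at hq
    simp only [mem_sdiff, mem_range] at hq
    by_cases hkj : k = j
    · subst hkj
      simp only [cfg, if_true] at hq
      exact htaken_j p hq.1
    · by_cases hkX : k ∈ X
      · simp only [cfg, hkj, hkX, if_true, if_false] at hq
        exact htaken k p hq.1 hq.2
      · simp [cfg, hkj, hkX] at hq
  choose st hst hst' using hsource
  have huniq : ∀ (q : clusterSources (cfg X)) (s : Fin m), rankOf (u q.1.1) (item s) = q.1.2 →
      st q = s := fun q s hs =>
    h.item_inj (rankOf_injective (hu _) ((hst' q).trans hs.symm))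
  refine ⟨j, X, mem_powerset.2 fun k hk => mem_erase.2 ⟨(hjX k hk).1, mem_univ _⟩, cfg X, ?_,
    fun q => (picker (st q), rk (st q)), fun q => ?_, fun q hq => ?_, fun k hk => ?_, hu,
    fun q => ⟨item (st q), hst' q, rfl⟩⟩
  · rw [Fintype.mem_piFinset]
    intro k
    by_cases hkj : k = j
    · subst hkj
      simp only [cfg, clusterOptions, if_true, mem_depthOptions]
      refine ⟨⟨le_rfl, le_rfl⟩, fun p hp => ?_, hpicks_card _⟩
      obtain ⟨s, hs, rfl⟩ := mem_image.1 hp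
      exact mem_range.2 (hmin s (mem_filter.1 hs).2.1)
    · by_cases hkX : k ∈ X
      · simp only [cfg, clusterOptions, hkj, hkX, if_true, if_false, mem_depthOptions]
        exact ⟨⟨(hjX k hkX).2.le, hdep k⟩, fun p hp => mem_range.2 (hpicks_dep k p hp),
          hpicks_card k⟩
      · simp [cfg, clusterOptions, hkj, hkX]
  · rw [clusterTargets, mem_union, mem_product, mem_rankPairs]
    rcases hXmin.1 q.1 q.2 (st q) (hst q) (hst' q) with hr | hr
    · exact Or.inl ⟨mem_univ _, mem_range.2 hr⟩
    · right
      rw [hcfg X _ hr]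
      exact hpicks _ (hst q)
  · have hq := mem_sdiff.1 (mem_rankPairs.1 hq)
    by_cases hk : picker (st q) = j ∨ picker (st q) ∈ X
    · rw [hcfg X _ hk] at hq
      exact hq.2 (hpicks _ (hst q))
    · push Not at hk
      simp [cfg, hk.1, hk.2] at hq
  · by_contra hno
    push Not at hno
    have hPe : P (X.erase k) := by
      intro q hq s hs hqs
      have hq' : q ∈ clusterSources (cfg X) := by
        rw [clusterSources, mem_rankPairs] at hq ⊢
        by_cases hqj : q.1 = j
        · simpa [cfg, hqj] using hq
        · by_cases hqX : q.1 ∈ X.erase k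
          · simpa [cfg, hqj, hqX, mem_of_mem_erase hqX] using hq
          · simp only [cfg, hqj, hqX, if_false] at hq
            simp at hq
      rcases hXmin.1 q hq' s hs hqs with hr | hr | hr
      · exact Or.inl hr
      · exact Or.inr (Or.inl hr)
      · refine Or.inr (Or.inr (mem_erase.2 ⟨fun hk' => ?_, hr⟩))
        have hs' := huniq ⟨q, hq'⟩ s hqs
        refine hno ⟨q, hq'⟩ (by rw [hs']; exact hk') ?_
        rw [hcfg X k (Or.inr hk), hs', ← hk']
        exact hpicks s hs
    exact notMem_erase k X (hXmin.2 hPe (erase_subset k X) hk)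

theorem pickCount_zero {n m : ℕ} (picker : Fin m → Fin n) (i : Fin n) :
    pickCount picker i 0 = 0 := by
  simp [pickCount]

theorem filter_lt_succ_picker {n m : ℕ} (picker : Fin m → Fin n) (i : Fin n) (s : Fin m) :
    (Finset.univ.filter fun s' : Fin m => (s' : ℕ) < s + 1 ∧ picker s' = i) =
      if picker s = i then
        insert s (Finset.univ.filter fun s' : Fin m => (s' : ℕ) < s ∧ picker s' = i)
      else Finset.univ.filter fun s' : Fin m => (s' : ℕ) < s ∧ picker s' = i := by
  ext s'
  split_ifs with h
  · simp only [mem_filter, mem_univ, true_and, mem_insert, Nat.lt_succ_iff_lt_or_eq, Fin.val_inj]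
    constructor
    · rintro ⟨h1 | rfl, h2⟩
      · exact Or.inr ⟨h1, h2⟩
      · exact Or.inl rfl
    · rintro (rfl | ⟨h1, h2⟩)
      · exact ⟨Or.inr rfl, h⟩
      · exact ⟨Or.inl h1, h2⟩
  · simp only [mem_filter, mem_univ, true_and, Nat.lt_succ_iff_lt_or_eq, Fin.val_inj]
    constructor
    · rintro ⟨h1 | rfl, h2⟩
      · exact ⟨h1, h2⟩
      · exact absurd h2 h
    · rintro ⟨h1, h2⟩
      exact ⟨Or.inl h1, h2⟩

theorem pickCount_succ {n m : ℕ} (picker : Fin m → Fin n) (i : Fin n) (s : Fin m) :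
    pickCount picker i (s + 1) = pickCount picker i s + if picker s = i then 1 else 0 := by
  rw [pickCount, filter_lt_succ_picker]
  split_ifs with h
  · rw [Finset.card_insert_of_notMem (by simp)]; rfl
  · rfl

/-- Numbering the picks of agent `i` consecutively. -/
theorem sum_pickCount {n m : ℕ} (picker : Fin m → Fin n) (i : Fin n) (f : ℕ → ℝ) {t : ℕ}
    (ht : t ≤ m) :
    ∑ s ∈ Finset.univ.filter fun s : Fin m => (s : ℕ) < t ∧ picker s = i, f (pickCount picker i s) =
      ∑ p ∈ Finset.range (pickCount picker i t), f p := by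
  induction t with
  | zero => simp [pickCount_zero]
  | succ t ih =>
    have := filter_lt_succ_picker picker i ⟨t, ht⟩
    have h2 := pickCount_succ picker i ⟨t, ht⟩
    simp only at this h2
    rw [this, h2]
    split_ifs with h
    · rw [Finset.sum_insert (by simp), ih (by omega), Finset.sum_range_succ]
      simp only
      ring
    · rw [ih (by omega), add_zero]

theorem sum_pickCount_eq {n m : ℕ} (picker : Fin m → Fin n) :
    ∑ i, pickCount picker i m = m := by
  have h := Finset.card_eq_sum_card_fiberwise (f := picker) (s := Finset.univ) (t := Finset.univ)
    (fun _ _ => mem_coe.2 (mem_univ _))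
  rw [Finset.card_univ, Fintype.card_fin] at h
  refine Eq.trans (Finset.sum_congr rfl fun i _ => congrArg Finset.card ?_) h.symm
  ext s; simp

/-- The value collected by agent `i`, spread out over the time axis in which her `p`-th pick
occupies the interval from `(p - 1) / w` to `p / w`. -/
noncomputable def spreadValue {n m : ℕ} (picker : Fin m → Fin n) (i : Fin n) (w : ℝ)
    (v : Fin m → ℝ) (x : ℝ) : ℝ :=
  ∑ s : Fin m with picker s = i, v s *
    (min x ((pickCount picker i s + 1) / w) - min x (pickCount picker i s / w))

theorem spreadValue_of_nonpos {n m : ℕ} (picker : Fin m → Fin n) (i : Fin n) {w : ℝ} (hw : 0 < w)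
    (v : Fin m → ℝ) {x : ℝ} (hx : x ≤ 0) : spreadValue picker i w v x = 0 := by
  refine Finset.sum_eq_zero fun s _ => ?_
  rw [min_eq_left (hx.trans (by positivity)), min_eq_left (hx.trans (by positivity))]
  ring

theorem spreadValue_le {n m : ℕ} (picker : Fin m → Fin n) (i : Fin n) {w : ℝ} (hw : 0 < w)
    {v : Fin m → ℝ} (hv : ∀ s, 0 ≤ v s) (x : ℝ) :
    spreadValue picker i w v x ≤ (∑ s : Fin m with picker s = i, v s) / w := by
  rw [Finset.sum_div]
  refine Finset.sum_le_sum fun s _ => ?_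
  rw [div_eq_mul_one_div (v s)]
  refine mul_le_mul_of_nonneg_left ?_ (hv s)
  have h1 : ((pickCount picker i s : ℝ) + 1) / w = pickCount picker i s / w + 1 / w := add_div ..
  have h2 : 0 < 1 / w := by positivity
  rw [h1]
  rcases le_total x (pickCount picker i s / w) with h | h
  · rw [min_eq_left h, min_eq_left (by linarith)]; linarith
  · rw [min_eq_right h]
    linarith [min_le_right x (pickCount picker i s / w + 1 / w)]

theorem mul_sub_le_spreadValue_sub {n m : ℕ} (picker : Fin m → Fin n) (i : Fin n) {w : ℝ}
    (hw : 0 < w) {v : Fin m → ℝ} (hv : ∀ s, 0 ≤ v s) {x y a : ℝ} {t : ℕ} (ht : t ≤ m) (hx : 0 ≤ x)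
    (hxy : x ≤ y) (hy : y ≤ pickCount picker i t / w)
    (ha : ∀ s : Fin m, (s : ℕ) < t → picker s = i → a ≤ v s) :
    a * (y - x) ≤ spreadValue picker i w v y - spreadValue picker i w v x := by
  let φ : ℕ → ℝ := fun p => min y (p / w) - min x (p / w)
  have hφ : ∀ p : ℕ, φ p ≤ φ (p + 1) := fun p => by
    have h1 : ((p + 1 : ℕ) : ℝ) / w = p / w + 1 / w := by push_cast; exact add_div ..
    have h2 : 0 < 1 / w := by positivity
    simp only [φ, h1]
    generalize (p : ℝ) / w = b, 1 / w = d at *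
    simp only [min_def]
    split_ifs <;> linarith
  have htel := sum_pickCount picker i (fun p => φ (p + 1) - φ p) ht
  rw [Finset.sum_range_sub φ] at htel
  have hend : φ (pickCount picker i t) - φ 0 = y - x := by
    simp only [φ]
    rw [min_eq_left hy, min_eq_left (hxy.trans hy)]
    simp [hx, hx.trans hxy]
  rw [hend] at htel
  calc a * (y - x) = ∑ s ∈ Finset.univ.filter fun s : Fin m => (s : ℕ) < t ∧ picker s = i,
        a * (φ (pickCount picker i s + 1) - φ (pickCount picker i s)) := by
        rw [← Finset.mul_sum, htel]
    _ ≤ ∑ s ∈ Finset.univ.filter fun s : Fin m => (s : ℕ) < t ∧ picker s = i,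
        v s * (φ (pickCount picker i s + 1) - φ (pickCount picker i s)) := by
        refine Finset.sum_le_sum fun s hs => ?_
        simp only [mem_filter, mem_univ, true_and] at hs
        exact mul_le_mul_of_nonneg_right (ha s hs.1 hs.2) (sub_nonneg.2 (hφ _))
    _ ≤ ∑ s : Fin m with picker s = i,
        v s * (φ (pickCount picker i s + 1) - φ (pickCount picker i s)) := by
        refine Finset.sum_le_sum_of_subset_of_nonneg (fun s hs => ?_) fun s _ _ =>
          mul_nonneg (hv s) (sub_nonneg.2 (hφ _))
        simp only [mem_filter, mem_univ, true_and] at hs ⊢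
        exact hs.2
    _ = _ := by
        rw [spreadValue, spreadValue, ← Finset.sum_sub_distrib]
        refine Finset.sum_congr rfl fun s _ => ?_
        simp only [φ]
        push_cast
        ring

/-- The weighted picking sequence keeps the numbers of picks balanced. -/
theorem IsWPSRun.pickCount_sub_one_div_le {n m : ℕ} {w : Fin n → ℝ} {u : Fin n → Fin m → ℝ}
    {picker : Fin m → Fin n} {item : Fin m → Fin m} (h : IsWPSRun w u picker item)
    (hw : ∀ i, 0 < w i) (k l : Fin n) {t : ℕ} (ht : t ≤ m) :
    ((pickCount picker k t : ℝ) - 1) / w k ≤ pickCount picker l t / w l := by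
  induction t with
  | zero =>
    rw [pickCount_zero, pickCount_zero]
    have := hw k
    simp only [Nat.cast_zero, zero_div, zero_sub]
    exact div_nonpos_of_nonpos_of_nonneg (by norm_num) this.le
  | succ t ih =>
    have h1 := pickCount_succ picker k ⟨t, ht⟩
    have h2 : (pickCount picker l t : ℝ) / w l ≤ pickCount picker l (t + 1) / w l := by
      have := hw l
      gcongr
      exact pickCount_mono picker l (by omega)
    simp only at h1
    rw [h1]
    refine le_trans ?_ h2
    split_ifs with hk
    · have := h.min_ratio ⟨t, ht⟩ l
      rw [hk] at this
      simpa using this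
    · simpa using ih (by omega)

theorem sum_runBundle {n m : ℕ} (picker : Fin m → Fin n) {item : Fin m → Fin m}
    (hitem : Function.Injective item) (i : Fin n) (f : Fin m → ℝ) :
    ∑ g ∈ runBundle picker item i, f g = ∑ s : Fin m with picker s = i, f (item s) :=
  Finset.sum_image fun _ _ _ _ h => hitem h

/-- Deterministic criterion: if items picked early are ranked highly, highly ranked items are
valuable, and no agent values too many of the items that another agent likes best very highly, then
the outcome is weighted envy-free. -/
theorem IsWPSRun.isWEF {n m : ℕ} {w : Fin n → ℝ} {u : Fin n → Fin m → ℝ}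
    {picker : Fin m → Fin n} {item : Fin m → Fin m} (h : IsWPSRun w u picker item)
    (hw : ∀ i, 0 < w i) {C : ℝ} (hwC : ∀ i j, w i ≤ C * w j)
    (hu : ∀ i g, 0 ≤ u i g ∧ u i g ≤ 1) {R b Q L : ℕ} {δ : ℝ} (hδ : 0 ≤ δ)
    (hRb : 1 ≤ ((R : ℝ) - b) * (δ / 2)) (hR : 1 ≤ R) (hQ : C * ((R : ℝ) - 1) < Q) (hm : n * Q < m)
    (hrank : ∀ s : Fin m, (∀ k, pickCount picker k s ≤ Q) → rankOf (u (picker s)) (item s) < L)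
    (htop : ∀ i g, rankOf (u i) g < L → 1 - δ / 2 ≤ u i g)
    (hfew : ∀ i j, i ≠ j →
      (Finset.univ.filter fun g => rankOf (u j) g < L ∧ 1 - δ < u i g).card < b) :
    IsWEF w u (runBundle picker item) := by
  intro i j
  rcases eq_or_ne i j with rfl | hij
  · exact le_rfl
  rw [sum_runBundle picker h.item_inj, sum_runBundle picker h.item_inj]
  have hwj := hw j
  have hwi := hw i
  have hcount : ∀ t ≤ m, pickCount picker j t < R → ∀ k, pickCount picker k t ≤ Q := by
    intro t ht htR k
    have h1 := h.pickCount_sub_one_div_le hw k j ht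
    rw [div_le_div_iff₀ (hw k) hwj] at h1
    have h2 : (pickCount picker j t : ℝ) ≤ R - 1 := by
      have : pickCount picker j t + 1 ≤ R := htR
      have : (pickCount picker j t : ℝ) + 1 ≤ R := by exact_mod_cast this
      linarith
    have h3 : ((pickCount picker k t : ℝ) - 1) * w j ≤ (C * (R - 1)) * w j :=
      h1.trans (by
        calc (pickCount picker j t : ℝ) * w k ≤ (R - 1) * (C * w j) :=
              mul_le_mul h2 (hwC k j) (hw k).le ((Nat.cast_nonneg _).trans h2)
          _ = _ := by ring)
    have h4 := le_of_mul_le_mul_right h3 hwj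
    have h5 : (pickCount picker k t : ℝ) < Q + 1 := by linarith
    have : pickCount picker k t < Q + 1 := by exact_mod_cast h5
    omega
  have hTR : R ≤ pickCount picker j m := by
    by_contra! hlt
    have := Finset.sum_le_sum fun k (_ : k ∈ Finset.univ) => hcount m le_rfl hlt k
    rw [sum_pickCount_eq] at this
    simp at this
    omega
  set v : Fin m → ℝ := fun s => u i (item s) with hv
  have hv0 : ∀ s, 0 ≤ v s := fun s => (hu i _).1
  have hv1 : ∀ s, v s ≤ 1 := fun s => (hu i _).2
  let F := spreadValue picker i (w i) v
  let f : ℕ → ℝ := fun p => F (p / w j) - F (((p : ℝ) - 1) / w j)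
  have hearly : ∀ s s' : Fin m, picker s = j → pickCount picker j s < R → s' ≤ s →
      rankOf (u (picker s')) (item s') < L := fun s s' _ hsR hs' =>
    hrank s' fun k => (pickCount_mono picker k hs').trans (hcount s s.2.le hsR k)
  have hinc : ∀ s : Fin m, picker s = j → 1 ≤ pickCount picker j s → ∀ a,
      (∀ s' < s, picker s' = i → a ≤ v s') → a / w j ≤ f (pickCount picker j s) := by
    intro s hs hs1 a ha
    have hs1' : (1 : ℝ) ≤ pickCount picker j s := by exact_mod_cast hs1
    have hr := h.min_ratio s i
    rw [hs] at hr
    have := mul_sub_le_spreadValue_sub picker i hwi hv0 s.2.le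
      (x := ((pickCount picker j s : ℝ) - 1) / w j) (y := pickCount picker j s / w j) (a := a)
      (div_nonneg (by linarith) hwj.le) (by gcongr; linarith) hr (fun s' hs' => ha s' hs')
    refine le_trans (le_of_eq ?_) this
    field_simp
    ring
  have hmono : ∀ s s' : Fin m, s' < s → picker s' = i → v s ≤ v s' := fun s s' hs' hi => by
    have := h.best_item s' (item s) fun s'' hs'' heq => by
      have := h.item_inj heq
      subst this
      exact absurd hs' (not_lt.2 (le_of_lt hs''))
    rwa [hi] at this
  have hf0 : f 0 = 0 := by
    simp only [f]
    have h0 : F ((0 : ℕ) / w j) = 0 := spreadValue_of_nonpos picker i hwi v (by simp)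
    have h1 : F (((0 : ℕ) - 1) / w j) = 0 := spreadValue_of_nonpos picker i hwi v
      (div_nonpos_of_nonpos_of_nonneg (by simp) hwj.le)
    rw [h0, h1, sub_zero]
  let G : Finset (Fin m) := Finset.univ.filter fun s => picker s = j ∧
    pickCount picker j s < R ∧ 1 - δ < v s
  have hG : G.card < b := by
    refine lt_of_le_of_lt ?_ (hfew i j hij)
    refine Finset.card_le_card_of_injOn item (fun s hs => ?_) (h.item_inj.injOn)
    simp only [G, mem_coe, mem_filter, mem_univ, true_and] at hs ⊢
    have := hearly s s hs.1 hs.2.1 le_rfl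
    rw [hs.1] at this
    exact ⟨this, hs.2.2⟩
  have hstep : ∀ s : Fin m, picker s = j →
      (v s + ((if pickCount picker j s < R then δ / 2 else 0) - (if s ∈ G then δ / 2 else 0)
        - if pickCount picker j s < 1 then 1 + δ / 2 else 0)) / w j ≤ f (pickCount picker j s) := by
    intro s hs
    rcases Nat.eq_zero_or_pos (pickCount picker j s) with h0 | h1
    · rw [h0, hf0]
      refine div_nonpos_of_nonpos_of_nonneg ?_ hwj.le
      have := hv1 s
      split_ifs <;> linarith
    · refine hinc s hs h1 _ fun s' hs' hi => ?_
      have hm' := hmono s s' hs' hi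
      have : ¬ pickCount picker j s < 1 := by omega
      rw [if_neg this]
      by_cases hR' : pickCount picker j s < R
      · rw [if_pos hR']
        by_cases hsG : s ∈ G
        · rw [if_pos hsG]; linarith
        · rw [if_neg hsG]
          have h3 : v s ≤ 1 - δ := by
            by_contra! hcon
            exact hsG (by simp [G, hs, hR', hcon])
          have h4 := hearly s s' hs hR' hs'.le
          rw [hi] at h4
          have h5 := htop i _ h4
          change _ ≤ u i (item s')
          linarith
      · have hsG : s ∉ G := fun hsG => hR' (by simpa [G, hs] using (mem_filter.1 hsG).2.2.1)
        rw [if_neg hR', if_neg hsG]; linarith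
  have hm_filter : ∀ k, (Finset.univ.filter fun s : Fin m => (s : ℕ) < m ∧ picker s = k) =
      Finset.univ.filter fun s : Fin m => picker s = k := fun k => by ext s; simp
  have hind : ∀ r c, r ≤ R → ∑ s : Fin m with picker s = j,
      (if pickCount picker j s < r then c else (0 : ℝ)) = r * c := by
    intro r c hr
    have := sum_pickCount picker j (fun p => if p < r then c else (0 : ℝ)) le_rfl
    rw [hm_filter] at this
    rw [this, ← Finset.sum_filter]
    have h2 : (Finset.range (pickCount picker j m)).filter (fun p => p < r) = Finset.range r := by
      ext p; simp; omega
    rw [h2]; simp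
  have hGsum : ∑ s : Fin m with picker s = j, (if s ∈ G then δ / 2 else 0) = G.card * (δ / 2) := by
    rw [← Finset.sum_filter, Finset.sum_const, nsmul_eq_mul]
    congr 3
    ext s
    simp only [G, mem_filter, mem_univ, true_and]
    tauto
  have htel : ∑ s : Fin m with picker s = j, f (pickCount picker j s) =
      F (((pickCount picker j m : ℝ) - 1) / w j) := by
    have := sum_pickCount picker j f le_rfl
    rw [hm_filter] at this
    have h2 := Finset.sum_range_sub (fun p : ℕ => F (((p : ℝ) - 1) / w j)) (pickCount picker j m)
    rw [this]
    have h3 : F (((0 : ℕ) - 1) / w j) = 0 := spreadValue_of_nonpos picker i hwi v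
      (div_nonpos_of_nonpos_of_nonneg (by simp) hwj.le)
    rw [h3, sub_zero] at h2
    rw [← h2]
    refine Finset.sum_congr rfl fun p _ => ?_
    simp only [f]
    push_cast
    rw [add_sub_cancel_right]
  have hsum := Finset.sum_le_sum fun s (hs : s ∈ Finset.univ.filter fun s => picker s = j) =>
    hstep s (mem_filter.1 hs).2
  rw [htel, ← Finset.sum_div, Finset.sum_add_distrib, Finset.sum_sub_distrib,
    Finset.sum_sub_distrib, hind R _ le_rfl, hind 1 _ hR, hGsum] at hsum
  refine le_trans ?_ (hsum.trans (spreadValue_le picker i hwi hv0 _))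
  gcongr
  have hG' : (G.card : ℝ) + 1 ≤ b := by exact_mod_cast hG
  have := mul_le_mul_of_nonneg_right hG' (by linarith : 0 ≤ δ / 2)
  push_cast
  simp only [hv]
  linarith

theorem utilMeasure_real_row {n m : ℕ} (D : Measure ℝ) [IsProbabilityMeasure D] (i : Fin n)
    (A : Set (Fin m → ℝ)) :
    (utilMeasure n m D).real {u | u i ∈ A} = (Measure.pi fun _ : Fin m => D).real A := by
  have h := utilMeasure_real_pi D (fun k : Fin n => if k = i then A else Set.univ)
  have hset : {u : Fin n → Fin m → ℝ | ∀ k, u k ∈ if k = i then A else Set.univ} =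
      {u | u i ∈ A} := by
    ext u
    refine ⟨fun h => by simpa using h i, fun h k => ?_⟩
    split_ifs with hk
    · exact hk ▸ h
    · trivial
  rw [hset] at h
  rw [h, Finset.prod_eq_single i (fun k _ hk => by simp [hk]) (by simp), if_pos rfl]

theorem utilMeasure_real_row_row {n m : ℕ} (D : Measure ℝ) [IsProbabilityMeasure D] {i j : Fin n}
    (hij : i ≠ j) (A B : Set (Fin m → ℝ)) :
    (utilMeasure n m D).real {u | u j ∈ A ∧ u i ∈ B} =
      (Measure.pi fun _ : Fin m => D).real A * (Measure.pi fun _ : Fin m => D).real B := by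
  have h := utilMeasure_real_pi D
    (fun k : Fin n => if k = j then A else if k = i then B else Set.univ)
  have hset : {u : Fin n → Fin m → ℝ | ∀ k, u k ∈ if k = j then A else if k = i then B
      else Set.univ} = {u | u j ∈ A ∧ u i ∈ B} := by
    ext u
    refine ⟨fun h => ⟨by simpa using h j, by simpa [hij] using h i⟩, fun h k => ?_⟩
    split_ifs with hk hk'
    · exact hk ▸ h.1
    · exact hk' ▸ h.2
    · trivial
  rw [hset] at h
  rw [h, Finset.prod_eq_mul j i hij.symm (fun k _ hk => by simp [hk.1, hk.2]) (by simp) (by simp),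
    if_pos rfl, if_neg hij, if_pos rfl]

theorem measureReal_pi_forall_mem {m : ℕ} (D : Measure ℝ) [IsProbabilityMeasure D]
    (G : Finset (Fin m)) (A : Set ℝ) :
    (Measure.pi fun _ : Fin m => D).real {x | ∀ g ∈ G, x g ∈ A} = D.real A ^ G.card := by
  classical
  have hset : {x : Fin m → ℝ | ∀ g ∈ G, x g ∈ A} =
      Set.univ.pi fun g => if g ∈ G then A else Set.univ := by
    ext x
    simp only [Set.mem_ofPred_eq, Set.mem_pi, Set.mem_univ, true_imp_iff]
    refine forall_congr' fun g => ?_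
    split_ifs with hg <;> simp [hg]
  rw [hset, measureReal_def, Measure.pi_pi, ENNReal.toReal_prod]
  have : ∀ g, (D (if g ∈ G then A else Set.univ)).toReal = if g ∈ G then D.real A else 1 :=
    fun g => by split_ifs <;> simp [measureReal_def]
  simp_rw [this]
  rw [Finset.prod_ite_mem, Finset.univ_inter, Finset.prod_const]

theorem div_le_card_filter_mod {m L l : ℕ} (hl : l < L) :
    m / L ≤ (Finset.univ.filter fun g : Fin m => (g : ℕ) % L = l).card := by
  have hlt : ∀ k < m / L, k * L + l < m := fun k hk => by
    have h1 : (k + 1) * L ≤ m / L * L := Nat.mul_le_mul_right L hk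
    have h2 := Nat.div_mul_le_self m L
    nlinarith
  calc m / L = (Finset.univ : Finset (Fin (m / L))).card := by simp
    _ ≤ _ := Finset.card_le_card_of_injOn (fun k => ⟨k * L + l, hlt k k.2⟩)
        (fun k _ => by simp [Nat.mod_eq_of_lt hl]) fun k _ k' _ hkk => by
          simp only [Fin.mk.injEq, Nat.add_right_cancel_iff] at hkk
          exact Fin.ext (Nat.eq_of_mul_eq_mul_right (by omega) hkk)

/-- With high probability the `L` best items of an agent are worth at least `c`. -/
theorem measureReal_exists_rankOf_lt_le {m L : ℕ} (D : Measure ℝ) [IsProbabilityMeasure D] (c : ℝ) :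
    (Measure.pi fun _ : Fin m => D).real {x | ∃ g, rankOf x g < L ∧ x g < c} ≤
      L * D.real (Set.Iio c) ^ (m / L) := by
  have hsub : {x : Fin m → ℝ | ∃ g, rankOf x g < L ∧ x g < c} ⊆ ⋃ l ∈ Finset.range L,
      {x | ∀ g ∈ Finset.univ.filter fun g : Fin m => (g : ℕ) % L = l, x g ∈ Set.Iio c} := by
    rintro x ⟨g, hg, hgc⟩
    by_contra hcon
    simp only [Set.mem_iUnion, Set.mem_ofPred_eq, mem_filter, mem_univ, true_and, mem_range,
      Set.mem_Iio, exists_prop] at hcon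
    push Not at hcon
    have : Nonempty (Fin m) := ⟨g⟩
    choose! b hb hbc using hcon
    refine absurd hg (not_lt.2 ?_)
    calc L = (Finset.range L).card := by simp
      _ ≤ rankOf x g := Finset.card_le_card_of_injOn b
          (fun l hl => by
            simp only [coe_range, Set.mem_Iio] at hl
            simpa using hgc.trans_le (hbc l hl))
          fun l hl l' hl' hll => by
            simp only [coe_range, Set.mem_Iio] at hl hl'
            rw [← hb l hl, ← hb l' hl', hll]
  calc _ ≤ (Measure.pi fun _ : Fin m => D).real _ := measureReal_mono hsub (measure_ne_top _ _)
    _ ≤ ∑ l ∈ Finset.range L, _ := measureReal_biUnion_finset_le _ _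
    _ ≤ ∑ l ∈ Finset.range L, D.real (Set.Iio c) ^ (m / L) := by
        refine Finset.sum_le_sum fun l hl => ?_
        rw [measureReal_pi_forall_mem]
        exact pow_le_pow_of_le_one measureReal_nonneg measureReal_le_one
          (div_le_card_filter_mod (mem_range.1 hl))
    _ = _ := by simp

theorem card_filter_rankOf_lt_le {m L : ℕ} {x : Fin m → ℝ} (hx : Function.Injective x) :
    (Finset.univ.filter fun g => rankOf x g < L).card ≤ L := by
  calc _ ≤ (Finset.range L).card := Finset.card_le_card_of_injOn (rankOf x) (fun g hg => by
        simpa using hg) (rankOf_injective hx).injOn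
    _ = L := by simp

/-- With high probability an agent values few of the `L` best items of another agent above `c`. -/
theorem measureReal_le_card_filter_rankOf_lt_le {n m L b : ℕ} (D : Measure ℝ)
    [IsProbabilityMeasure D] (c : ℝ) {i j : Fin n} (hij : i ≠ j) :
    (utilMeasure n m D).real {u | Function.Injective (u j) ∧
      b ≤ (Finset.univ.filter fun g => rankOf (u j) g < L ∧ c < u i g).card} ≤
      2 ^ L * D.real (Set.Ioi c) ^ b := by
  classical
  let A : Finset (Fin m) → Set (Fin m → ℝ) := fun T =>
    {x | Function.Injective x ∧ ∀ g, rankOf x g < L ↔ g ∈ T}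
  let B : Finset (Fin m) → Set (Fin m → ℝ) := fun T =>
    {y | b ≤ (T.filter fun g => c < y g).card}
  let Ts : Finset (Finset (Fin m)) := Finset.univ.filter fun T => T.card ≤ L
  have hsub : {u : Fin n → Fin m → ℝ | Function.Injective (u j) ∧
      b ≤ (Finset.univ.filter fun g => rankOf (u j) g < L ∧ c < u i g).card} ⊆
      ⋃ T ∈ Ts, {u | u j ∈ A T ∧ u i ∈ B T} := by
    rintro u ⟨hu, hb⟩
    simp only [Set.mem_iUnion]
    refine ⟨Finset.univ.filter fun g => rankOf (u j) g < L, ?_, ⟨hu, by simp⟩, ?_⟩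
    · simpa [Ts] using card_filter_rankOf_lt_le hu
    · simpa only [B, Set.mem_ofPred_eq, Finset.filter_filter] using hb
  have hA : ∀ T, MeasurableSet (A T) := fun T => by
    have : A T = {x | Function.Injective x} ∩
        ⋂ g, (fun x => rankOf x g) ⁻¹' {p | p < L ↔ g ∈ T} := by
      ext x; simp [A]
    rw [this]
    exact (measurableSet_injective m).inter
      (MeasurableSet.iInter fun g => measurable_rankOf g (MeasurableSet.of_discrete))
  have hdisj : Set.PairwiseDisjoint (↑Ts) A := by
    intro T _ T' _ hTT
    rw [Function.onFun, Set.disjoint_left]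
    rintro x ⟨-, h1⟩ ⟨-, h2⟩
    exact hTT (Finset.ext fun g => (h1 g).symm.trans (h2 g))
  have hB : ∀ T ∈ Ts, (Measure.pi fun _ : Fin m => D).real (B T) ≤
      2 ^ L * D.real (Set.Ioi c) ^ b := by
    intro T hT
    have hBsub : B T ⊆ ⋃ G ∈ Finset.powersetCard b T, {y | ∀ g ∈ G, y g ∈ Set.Ioi c} := by
      intro y hy
      obtain ⟨G, hG, hGb⟩ := Finset.exists_subset_card_eq hy
      simp only [Set.mem_iUnion]
      exact ⟨G, mem_powersetCard.2 ⟨hG.trans (filter_subset _ _), hGb⟩, fun g hg =>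
        (mem_filter.1 (hG hg)).2⟩
    calc _ ≤ (Measure.pi fun _ : Fin m => D).real _ := measureReal_mono hBsub (measure_ne_top _ _)
      _ ≤ ∑ G ∈ Finset.powersetCard b T, _ := measureReal_biUnion_finset_le _ _
      _ = ∑ G ∈ Finset.powersetCard b T, D.real (Set.Ioi c) ^ b :=
          Finset.sum_congr rfl fun G hG => by
            rw [measureReal_pi_forall_mem, (mem_powersetCard.1 hG).2]
      _ = (Finset.powersetCard b T).card * D.real (Set.Ioi c) ^ b := by simp
      _ ≤ 2 ^ L * D.real (Set.Ioi c) ^ b := by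
          gcongr
          have h1 : (Finset.powersetCard b T).card ≤ 2 ^ L := by
            rw [card_powersetCard]
            exact (Nat.choose_le_two_pow _ _).trans
              (Nat.pow_le_pow_right (by norm_num) (mem_filter.1 hT).2)
          exact_mod_cast h1
  have hsum : ∑ T ∈ Ts, (Measure.pi fun _ : Fin m => D).real (A T) ≤ 1 := by
    have := sum_measureReal_le_measureReal_univ (μ := Measure.pi fun _ : Fin m => D) (s := Ts)
      (fun T _ => hA T) hdisj
    simpa using this
  calc _ ≤ (utilMeasure n m D).real _ := measureReal_mono hsub (measure_ne_top _ _)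
    _ ≤ ∑ T ∈ Ts, (utilMeasure n m D).real {u | u j ∈ A T ∧ u i ∈ B T} :=
        measureReal_biUnion_finset_le _ _
    _ ≤ ∑ T ∈ Ts, (Measure.pi fun _ : Fin m => D).real (A T) *
          (2 ^ L * D.real (Set.Ioi c) ^ b) := by
        refine Finset.sum_le_sum fun T hT => ?_
        rw [utilMeasure_real_row_row D hij]
        exact mul_le_mul_of_nonneg_left (hB T hT) measureReal_nonneg
    _ ≤ 1 * (2 ^ L * D.real (Set.Ioi c) ^ b) := by
        rw [← Finset.sum_mul]
        gcongr
    _ = _ := one_mul _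

theorem measure_pi_not_injective {m : ℕ} (D : Measure ℝ) [IsProbabilityMeasure D] [NullSingletonClass D] :
    (Measure.pi fun _ : Fin m => D) {x | ¬ Function.Injective x} = 0 := by
  set μ := Measure.pi fun _ : Fin m => D with hμ
  have hpair : ∀ a b : Fin m, a ≠ b → μ {x | x a = x b} = 0 := by
    intro a b hab
    have hind := (ProbabilityTheory.iIndepFun_pi (μ := fun _ : Fin m => D)
      (X := fun _ x => x) fun _ => aemeasurable_id).indepFun hab
    have hmap := (ProbabilityTheory.indepFun_iff_map_prod_eq_prod_map_map
      (measurable_pi_apply a).aemeasurable (measurable_pi_apply b).aemeasurable).1 hind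
    have hdiag : MeasurableSet {p : ℝ × ℝ | p.1 = p.2} :=
      measurableSet_eq_fun measurable_fst measurable_snd
    have hab' : ∀ c : Fin m, μ.map (fun x => x c) = D := fun c =>
      (measurePreserving_eval (fun _ : Fin m => D) c).map_eq
    rw [← hμ, hab' a, hab' b] at hmap
    have : μ {x | x a = x b} = (μ.map fun x => (x a, x b)) {p | p.1 = p.2} := by
      rw [Measure.map_apply ((measurable_pi_apply a).prodMk (measurable_pi_apply b)) hdiag]
      rfl
    rw [this, hmap, Measure.measure_prod_null hdiag]
    refine Filter.Eventually.of_forall fun y => ?_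
    have : Prod.mk y ⁻¹' {p : ℝ × ℝ | p.1 = p.2} = {y} := by
      ext z; simp [eq_comm]
    simp [this]
  have hset : {x : Fin m → ℝ | ¬ Function.Injective x} ⊆
      ⋃ a, ⋃ b, ⋃ _ : a ≠ b, {x | x a = x b} := by
    intro x hx
    simp only [Set.mem_ofPred_eq, Function.Injective, not_forall] at hx
    obtain ⟨a, b, h1, h2⟩ := hx
    simp only [Set.mem_iUnion]
    exact ⟨a, b, h2, h1⟩
  refine measure_mono_null hset ?_
  simp only [measure_iUnion_null_iff]
  exact fun a b hab => hpair a b hab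

theorem PDFBounded.apply_le {α β : ℝ} {D : Measure ℝ} (h : PDFBounded α β D) {s : Set ℝ}
    (hs : MeasurableSet s) : D s ≤ ENNReal.ofReal β * volume (s ∩ Set.Icc 0 1) := by
  obtain ⟨f, rfl, hf⟩ := h
  rw [withDensity_apply f hs, Measure.restrict_restrict hs, ← setLIntegral_const]
  exact setLIntegral_mono' (hs.inter measurableSet_Icc) fun x hx => (hf x hx.2).2

theorem PDFBounded.le_apply {α β : ℝ} {D : Measure ℝ} (h : PDFBounded α β D) {s : Set ℝ}
    (hs : MeasurableSet s) : ENNReal.ofReal α * volume (s ∩ Set.Icc 0 1) ≤ D s := by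
  obtain ⟨f, rfl, hf⟩ := h
  rw [withDensity_apply f hs, Measure.restrict_restrict hs, ← setLIntegral_const]
  exact setLIntegral_mono' (hs.inter measurableSet_Icc) fun x hx => (hf x hx.2).1

theorem PDFBounded.nullSingletonClass {α β : ℝ} {D : Measure ℝ} (h : PDFBounded α β D) :
    NullSingletonClass D :=
  ⟨fun x => le_antisymm ((h.apply_le (measurableSet_singleton x)).trans (by
    have : volume ({x} ∩ Set.Icc (0 : ℝ) 1) = 0 :=
      measure_mono_null Set.inter_subset_left (by simp)
    simp [this])) zero_le⟩

theorem PDFBounded.ae_mem_Icc {α β : ℝ} {D : Measure ℝ} (h : PDFBounded α β D) :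
    ∀ᵐ x ∂D, x ∈ Set.Icc (0 : ℝ) 1 := by
  have := h.apply_le (measurableSet_Icc (a := (0 : ℝ)) (b := 1)).compl
  rw [Set.compl_inter_self] at this
  rw [measure_empty, mul_zero] at this
  exact le_antisymm this zero_le

theorem PDFBounded.le_one {α β : ℝ} {D : Measure ℝ} [IsProbabilityMeasure D]
    (h : PDFBounded α β D) : α ≤ 1 := by
  have := h.le_apply MeasurableSet.univ
  simpa using this

theorem PDFBounded.one_le {α β : ℝ} {D : Measure ℝ} [IsProbabilityMeasure D]
    (h : PDFBounded α β D) : 1 ≤ β := by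
  have := h.apply_le MeasurableSet.univ
  simpa using this

theorem PDFBounded.real_Ioi_le {α β : ℝ} {D : Measure ℝ} (h : PDFBounded α β D) (hβ : 0 ≤ β)
    {δ : ℝ} (hδ : 0 ≤ δ) : D.real (Set.Ioi (1 - δ)) ≤ β * δ := by
  have h1 := h.apply_le (measurableSet_Ioi (a := 1 - δ))
  have h2 : volume (Set.Ioi (1 - δ) ∩ Set.Icc (0 : ℝ) 1) ≤ ENNReal.ofReal δ := by
    calc _ ≤ volume (Set.Icc (1 - δ) 1) :=
          measure_mono fun x hx => ⟨(le_of_lt hx.1), hx.2.2⟩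
      _ = ENNReal.ofReal δ := by rw [Real.volume_Icc]; congr 1; ring
  refine ENNReal.toReal_le_of_le_ofReal (by positivity) (h1.trans ?_)
  rw [ENNReal.ofReal_mul hβ]
  gcongr

theorem PDFBounded.real_Iio_le {α β : ℝ} {D : Measure ℝ} [IsProbabilityMeasure D]
    (h : PDFBounded α β D) (hα : 0 ≤ α) {η : ℝ} (hη1 : η ≤ 1) :
    D.real (Set.Iio (1 - η)) ≤ 1 - α * η := by
  have h1 := h.le_apply (measurableSet_Ici (a := 1 - η))
  have h2 : ENNReal.ofReal η ≤ volume (Set.Ici (1 - η) ∩ Set.Icc (0 : ℝ) 1) := by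
    calc ENNReal.ofReal η = volume (Set.Icc (1 - η) 1) := by
          rw [Real.volume_Icc]; congr 1; ring
      _ ≤ volume (Set.Ici (1 - η) ∩ Set.Icc (0 : ℝ) 1) :=
          measure_mono fun x hx => ⟨hx.1, by linarith [hx.1], hx.2⟩
  have h3 : ENNReal.ofReal (α * η) ≤ D (Set.Ici (1 - η)) := by
    rw [ENNReal.ofReal_mul hα]
    exact le_trans (by gcongr) h1
  have h4 : α * η ≤ D.real (Set.Ici (1 - η)) :=
    (ENNReal.ofReal_le_iff_le_toReal (measure_ne_top _ _)).1 h3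
  rw [← Set.compl_Ici, measureReal_compl measurableSet_Ici, probReal_univ]
  linarith

theorem ae_utilMeasure_mem_Icc {n m : ℕ} {D : Measure ℝ} [IsProbabilityMeasure D]
    (hD : ∀ᵐ x ∂D, x ∈ Set.Icc (0 : ℝ) 1) :
    ∀ᵐ u ∂utilMeasure n m D, ∀ i g, u i g ∈ Set.Icc (0 : ℝ) 1 := by
  refine Filter.eventually_all.2 fun i => ?_
  refine Measure.tendsto_eval_ae_ae (μ := fun _ : Fin n => Measure.pi fun _ : Fin m => D)
    (i := i) |>.eventually (p := fun x => ∀ g, x g ∈ Set.Icc (0 : ℝ) 1) ?_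
  exact Filter.eventually_all.2 fun g =>
    (Measure.tendsto_eval_ae_ae (μ := fun _ : Fin m => D) (i := g)).eventually hD

theorem ae_utilMeasure_injective {n m : ℕ} {D : Measure ℝ} [IsProbabilityMeasure D]
    [NullSingletonClass D] :
    ∀ᵐ u ∂utilMeasure n m D, ∀ i, Function.Injective (u i) := by
  refine Filter.eventually_all.2 fun i => ?_
  exact Measure.tendsto_eval_ae_ae (μ := fun _ : Fin n => Measure.pi fun _ : Fin m => D)
    (i := i) |>.eventually (p := fun x => Function.Injective x) (measure_pi_not_injective D)

/-- Non-asymptotic form of the main theorem. -/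
theorem le_utilMeasure_isWEF {α β C : ℝ} (hα : 0 < α) {D : Measure ℝ} [IsProbabilityMeasure D]
    (hD : PDFBounded α β D) {n m : ℕ} {w : Fin n → ℝ} (hw : ∀ i, 0 < w i)
    (hwC : ∀ i j, w i ≤ C * w j) {R b Q L : ℕ} {δ : ℝ} (hδ : 0 ≤ δ) (hδ2 : δ ≤ 2)
    (hRb : 1 ≤ ((R : ℝ) - b) * (δ / 2)) (hR : 1 ≤ R) (hQ : C * ((R : ℝ) - 1) < Q) (hm : n * Q < m)
    (hQ0 : 0 < Q) (hL : 4 * Q ≤ L) (hρ : 5 * Real.exp 1 ^ 3 * (Q * n / m) ≤ 1 / 64) :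
    ENNReal.ofReal (1 - (n * (2 * (1 / 8) ^ L) + n * (L * (1 - α * (δ / 2)) ^ (m / L)) +
        n * (n * (2 ^ L * (β * δ) ^ b)))) ≤
      utilMeasure n m D {u | ∀ picker : Fin m → Fin n, ∀ item : Fin m → Fin m,
        IsWPSRun w u picker item → IsWEF w u (runBundle picker item)} := by
  have hβ : 0 ≤ β := zero_le_one.trans hD.one_le
  have := hD.nullSingletonClass
  set μ := utilMeasure n m D with hμ
  set S := {u : Fin n → Fin m → ℝ | ∀ picker : Fin m → Fin n, ∀ item : Fin m → Fin m,
        IsWPSRun w u picker item → IsWEF w u (runBundle picker item)} with hS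
  let E₁ : Set (Fin n → Fin m → ℝ) := ⋃ j ∈ Finset.univ, clusterEvent n m Q L j
  let E₂ : Set (Fin n → Fin m → ℝ) := ⋃ i ∈ Finset.univ,
    {u | u i ∈ {x : Fin m → ℝ | ∃ g, rankOf x g < L ∧ x g < 1 - δ / 2}}
  let E₃ : Set (Fin n → Fin m → ℝ) := ⋃ i ∈ Finset.univ, ⋃ j ∈ Finset.univ.erase i,
    {u | Function.Injective (u j) ∧
      b ≤ (Finset.univ.filter fun g => rankOf (u j) g < L ∧ 1 - δ < u i g).card}
  have h₁ : μ.real E₁ ≤ n * (2 * (1 / 8) ^ L) := by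
    calc μ.real E₁ ≤ ∑ j, μ.real (clusterEvent n m Q L j) := measureReal_biUnion_finset_le _ _
      _ ≤ ∑ _j : Fin n, 2 * (1 / 8 : ℝ) ^ L :=
          Finset.sum_le_sum fun j _ => measureReal_clusterEvent_le D j hQ0 hL hρ
      _ = _ := by simp
  have h₂ : μ.real E₂ ≤ n * (L * (1 - α * (δ / 2)) ^ (m / L)) := by
    calc μ.real E₂ ≤ ∑ i, μ.real _ := measureReal_biUnion_finset_le _ _
      _ ≤ ∑ _i : Fin n, L * (1 - α * (δ / 2)) ^ (m / L) :=
          Finset.sum_le_sum fun i _ => by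
            rw [utilMeasure_real_row]
            refine (measureReal_exists_rankOf_lt_le D _).trans ?_
            gcongr
            exact hD.real_Iio_le hα.le (by linarith)
      _ = _ := by simp
  have h₃ : μ.real E₃ ≤ n * (n * (2 ^ L * (β * δ) ^ b)) := by
    have hq : 0 ≤ 2 ^ L * (β * δ) ^ b := by positivity
    calc μ.real E₃ ≤ ∑ i, μ.real _ := measureReal_biUnion_finset_le _ _
      _ ≤ ∑ i : Fin n, ∑ j ∈ Finset.univ.erase i, μ.real _ :=
          Finset.sum_le_sum fun i _ => measureReal_biUnion_finset_le _ _
      _ ≤ ∑ i : Fin n, ∑ j ∈ Finset.univ.erase i, 2 ^ L * (β * δ) ^ b :=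
          Finset.sum_le_sum fun i _ => Finset.sum_le_sum fun j hj => by
            refine (measureReal_le_card_filter_rankOf_lt_le D _ (ne_of_mem_erase hj).symm).trans ?_
            gcongr
            exact hD.real_Ioi_le hβ hδ
      _ ≤ ∑ i : Fin n, ∑ j : Fin n, 2 ^ L * (β * δ) ^ b :=
          Finset.sum_le_sum fun i _ =>
            Finset.sum_le_sum_of_subset_of_nonneg (erase_subset _ _) fun _ _ _ => hq
      _ = _ := by simp
  have hsub : ∀ᵐ u ∂μ, u ∉ S → u ∈ E₁ ∪ E₂ ∪ E₃ := by
    filter_upwards [ae_utilMeasure_injective, ae_utilMeasure_mem_Icc hD.ae_mem_Icc]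
      with u hinj hIcc hu
    by_contra hcon
    simp only [E₁, E₂, E₃, Set.mem_union, Set.mem_iUnion, mem_univ, mem_erase, and_true,
      Set.mem_ofPred_eq, exists_prop, true_and] at hcon
    push Not at hcon
    obtain ⟨⟨hc₁, hc₂⟩, hc₃⟩ := hcon
    refine hu fun picker item hrun => hrun.isWEF hw hwC hIcc hδ hRb hR hQ hm (fun s hs => ?_)
      (fun i g hg => hc₂ i g hg) fun i j hij => hc₃ i j hij.symm (hinj j)
    by_contra! hr
    obtain ⟨j, hj⟩ := hrun.exists_mem_clusterEvent hinj hs hr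
    exact hc₁ j hj
  have hSc : μ.real Sᶜ ≤ μ.real E₁ + μ.real E₂ + μ.real E₃ := by
    calc μ.real Sᶜ ≤ μ.real (E₁ ∪ E₂ ∪ E₃) :=
          ENNReal.toReal_mono (measure_ne_top _ _) (measure_mono_ae hsub)
      _ ≤ μ.real (E₁ ∪ E₂) + μ.real E₃ := measureReal_union_le _ _
      _ ≤ _ := by gcongr; exact measureReal_union_le _ _
  have hone : 1 ≤ μ.real S + μ.real Sᶜ := by
    have := measureReal_union_le (μ := μ) S Sᶜ
    rwa [Set.union_compl_self, probReal_univ] at this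
  refine ENNReal.ofReal_le_of_le_toReal ?_
  change _ ≤ μ.real S
  linarith

theorem exp_neg_mul_log {x : ℝ} (hx : 0 < x) (k : ℕ) : Real.exp (-(k * Real.log x)) = (x ^ k)⁻¹ := by
  rw [Real.exp_neg, Real.exp_nat_mul, Real.exp_log hx]

theorem mul_two_mul_one_eighth_pow_le {n L : ℕ} (hn : 0 < n) (hL : Real.log n ≤ L) :
    (n : ℝ) * (2 * (1 / 8) ^ L) ≤ 2 / n := by
  have hn' : (0 : ℝ) < n := by exact_mod_cast hn
  have h8 : (1 / 8 : ℝ) ≤ Real.exp (-2) := by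
    have h2 : Real.exp 2 = Real.exp 1 ^ 2 := by rw [← Real.exp_nat_mul]; norm_num
    rw [Real.exp_neg, one_div, h2]
    have := Real.exp_one_lt_d9
    have h0 := Real.exp_pos 1
    gcongr
    nlinarith
  have h : (1 / 8 : ℝ) ^ L ≤ ((n : ℝ) ^ 2)⁻¹ := by
    calc (1 / 8 : ℝ) ^ L ≤ Real.exp (-2) ^ L := by gcongr
      _ = Real.exp (-(2 * L)) := by rw [← Real.exp_nat_mul]; congr 1; ring
      _ ≤ Real.exp (-((2 : ℕ) * Real.log n)) := by
          apply Real.exp_le_exp.2; push_cast; linarith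
      _ = _ := exp_neg_mul_log hn' 2
  calc (n : ℝ) * (2 * (1 / 8) ^ L) ≤ n * (2 * ((n : ℝ) ^ 2)⁻¹) := by gcongr
    _ = 2 / n := by field_simp

theorem mul_mul_one_sub_pow_le {n L M : ℕ} {q : ℝ} (hn : 0 < n) (hLn : L ≤ n)
    (hq1 : q ≤ 1) (hM : 3 * Real.log n ≤ q * M) :
    (n : ℝ) * (L * (1 - q) ^ M) ≤ 1 / n := by
  have hn' : (0 : ℝ) < n := by exact_mod_cast hn
  have h : (1 - q) ^ M ≤ ((n : ℝ) ^ 3)⁻¹ := by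
    calc (1 - q) ^ M ≤ Real.exp (-q) ^ M := by
          have := Real.add_one_le_exp (-q)
          have h0 : 0 ≤ 1 - q := by linarith
          gcongr
          linarith
      _ = Real.exp (-(q * M)) := by rw [← Real.exp_nat_mul]; congr 1; ring
      _ ≤ Real.exp (-((3 : ℕ) * Real.log n)) := by
          apply Real.exp_le_exp.2; push_cast; linarith
      _ = _ := exp_neg_mul_log hn' 3
  have hL' : (L : ℝ) ≤ n := by exact_mod_cast hLn
  calc (n : ℝ) * (L * (1 - q) ^ M) ≤ n * (n * ((n : ℝ) ^ 3)⁻¹) := by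
        have : 0 ≤ 1 - q := by linarith
        gcongr
    _ = 1 / n := by field_simp

theorem mul_mul_two_pow_mul_pow_le {n L b : ℕ} {q c : ℝ} (hn : 0 < n) (hL : (L : ℝ) ≤ Real.log n + 1)
    (hq0 : 0 ≤ q) (hq : q ≤ Real.exp (-c)) (hb : 4 * Real.log n ≤ c * b) :
    (n : ℝ) * (n * (2 ^ L * q ^ b)) ≤ 2 / n := by
  have hn' : (0 : ℝ) < n := by exact_mod_cast hn
  have h : q ^ b ≤ ((n : ℝ) ^ 4)⁻¹ := by
    calc q ^ b ≤ Real.exp (-c) ^ b := by gcongr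
      _ = Real.exp (-(c * b)) := by rw [← Real.exp_nat_mul]; congr 1; ring
      _ ≤ Real.exp (-((4 : ℕ) * Real.log n)) := by
          apply Real.exp_le_exp.2; push_cast; linarith
      _ = _ := exp_neg_mul_log hn' 4
  have h2 : (2 : ℝ) ^ L ≤ 2 * n := by
    have hlog2 : Real.log 2 ≤ 1 := by have := Real.log_two_lt_d9; linarith
    have hlogn : 0 ≤ Real.log n := Real.log_natCast_nonneg n
    calc (2 : ℝ) ^ L = Real.exp (L * Real.log 2) := by
          rw [Real.exp_nat_mul, Real.exp_log (by norm_num)]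
      _ ≤ Real.exp (Real.log 2 + Real.log n) := by
          apply Real.exp_le_exp.2
          have := Real.log_pos (one_lt_two (α := ℝ))
          nlinarith
      _ = 2 * n := by rw [Real.exp_add, Real.exp_log (by norm_num), Real.exp_log hn']
  calc (n : ℝ) * (n * (2 ^ L * q ^ b)) ≤ n * (n * ((2 * n) * ((n : ℝ) ^ 4)⁻¹)) := by gcongr
    _ = 2 / n := by field_simp

theorem mul_two_div_le_exp_neg {β lam b : ℝ} (hβ : 0 < β) (hlam0 : 0 < lam) (hlamβ : 2 * β ≤ lam)
    (hb : 8 * (Real.exp lam / lam) ≤ b) : β * (2 / b) ≤ Real.exp (-(lam / 2)) := by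
  have hb0 : 0 < b := lt_of_lt_of_le (by positivity) hb
  rw [Real.exp_neg]
  have hsq : Real.exp lam = Real.exp (lam / 2) ^ 2 := by
    rw [← Real.exp_nat_mul]; congr 1; push_cast; ring
  have hexp0 := Real.exp_pos (lam / 2)
  have hquad : lam ^ 2 / 8 ≤ Real.exp (lam / 2) := by
    have := Real.pow_div_factorial_le_exp (lam / 2) (by positivity) 2
    norm_num [Nat.factorial] at this
    nlinarith
  rw [le_inv_comm₀ (by positivity) hexp0]
  have h1 : Real.exp (lam / 2) * (2 * β) ≤ 8 * (Real.exp lam / lam) := by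
    rw [← mul_div_assoc, le_div_iff₀ hlam0]
    have h2 : 2 * β * lam ≤ 8 * Real.exp (lam / 2) := by nlinarith
    calc Real.exp (lam / 2) * (2 * β) * lam = Real.exp (lam / 2) * (2 * β * lam) := by ring
      _ ≤ Real.exp (lam / 2) * (8 * Real.exp (lam / 2)) := by gcongr
      _ = 8 * Real.exp lam := by rw [hsq]; ring
  have h3 : (β * (2 / b))⁻¹ = b / (2 * β) := by field_simp
  rw [h3, le_div_iff₀ (by positivity)]
  linarith

theorem three_mul_le_div_mul {α C ℓ lam b : ℝ} {n m L : ℕ} (hα : 0 < α) (hC : 1 ≤ C)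
    (hlam0 : 0 < lam) (hlamα : 288 / α ≤ lam) (hlamℓ : lam ≤ ℓ) (hb0 : 0 < b)
    (hb2 : b ≤ 16 * (ℓ / lam)) (hL0 : (0 : ℝ) < L) (hLℓ : (L : ℝ) ≤ 2 * ℓ) (hℓn1 : ℓ ≤ n)
    (hℓn : ℓ ^ 3 / 6 ≤ n) (hm' : 10 ^ 6 * C * (n * (ℓ / lam)) ≤ m) :
    3 * ℓ ≤ α / b * ((m / L : ℕ) : ℝ) := by
  have hℓ0 : 0 < ℓ := hlam0.trans_le hlamℓ
  have hn' : (0 : ℝ) < n := hℓ0.trans_le hℓn1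
  have hfloor : (m : ℝ) / L < ((m / L : ℕ) : ℝ) + 1 := by
    rw [div_lt_iff₀ hL0]
    have h := Nat.lt_div_mul_add (a := m) (b := L) (by exact_mod_cast hL0)
    have h' : (m : ℝ) < (m / L : ℕ) * L + L := by exact_mod_cast h
    linarith
  have hnlam : 1 ≤ n / lam := by
    rw [one_le_div hlam0]
    linarith
  have hmL : 2 * (n / lam) ≤ m / L := by
    rw [le_div_iff₀ hL0]
    calc 2 * (n / lam) * L ≤ 2 * (n / lam) * (2 * ℓ) := by gcongr
      _ = 4 * (n * (ℓ / lam)) := by ring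
      _ ≤ 10 ^ 6 * C * (n * (ℓ / lam)) := by
          gcongr
          linarith
      _ ≤ m := hm'
  have hM : (n : ℝ) / lam ≤ ((m / L : ℕ) : ℝ) := by linarith
  have hαn : 48 * ℓ ^ 2 ≤ α * n := by
    have h1 : 288 ≤ lam * α := (div_le_iff₀ hα).1 hlamα
    have h2 : 288 ≤ ℓ * α := h1.trans (by gcongr)
    calc 48 * ℓ ^ 2 = 288 * (ℓ ^ 2 / 6) := by ring
      _ ≤ ℓ * α * (ℓ ^ 2 / 6) := by gcongr
      _ = α * (ℓ ^ 3 / 6) := by ring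
      _ ≤ α * n := by gcongr
  calc 3 * ℓ ≤ α * n / (16 * ℓ) := by
        rw [le_div_iff₀ (by positivity)]; linarith
    _ = α / (16 * (ℓ / lam)) * (n / lam) := by field_simp
    _ ≤ α / b * ((m / L : ℕ) : ℝ) := by gcongr

/-- Let `α, β > 0` and `C ≥ 1` be constants.  There is a constant `K` (depending only on
`α`, `β`, `C`) such that for every `(α,β)`-PDF-bounded distribution `D`, all sufficiently
large `n`, every `m ≥ 10^6·(β/α)·C·n·log n / log log n`, and every weight vector with
ratio at most `C`, when the `n·m` utilities are drawn independently from `D`, the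
weighted picking sequence algorithm produces a WEF allocation with probability at least
`1 - K/n`. -/
theorem wps_WEF_whp (α β C : ℝ) (hα : 0 < α) (hβ : 0 < β) (hC : 1 ≤ C) :
    ∃ K : ℝ, 0 < K ∧ ∃ N : ℕ,
      ∀ D : Measure ℝ, IsProbabilityMeasure D → PDFBounded α β D →
      ∀ n : ℕ, N ≤ n → ∀ m : ℕ,
      10 ^ 6 * (β / α) * C * n * Real.log n / Real.log (Real.log n) ≤ (m : ℝ) →
      ∀ w : Fin n → ℝ, (∀ i, 0 < w i) → (∀ i j, w i ≤ C * w j) →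
      ENNReal.ofReal (1 - K / n) ≤
        utilMeasure n m D
          {u | ∀ picker : Fin m → Fin n, ∀ item : Fin m → Fin m,
            IsWPSRun w u picker item → IsWEF w u (runBundle picker item)} := by
  have hev : ∀ᶠ n : ℕ in Filter.atTop,
      128 * C + 2 * β + 288 / α ≤ Real.log (Real.log n) :=
    (Real.tendsto_log_atTop.comp (Real.tendsto_log_atTop.comp tendsto_natCast_atTop_atTop)).eventually
      (Filter.eventually_ge_atTop _)
  obtain ⟨N, hN⟩ := Filter.eventually_atTop.1 hev
  refine ⟨5, by norm_num, N, fun D _ hD n hn m hm w hw hwC => ?_⟩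
  have hα1 := hD.le_one
  have hβ1 := hD.one_le
  have hlam := hN n hn
  set ℓ := Real.log n with hℓ
  set lam := Real.log ℓ with hlamdef
  have hα' : 288 ≤ 288 / α := by rw [le_div_iff₀ hα]; linarith
  have hlam1 : 416 ≤ lam := by linarith
  have hlamC : 128 * C ≤ lam := by linarith
  have hlamβ : 2 * β ≤ lam := by linarith
  have hlamα : 288 / α ≤ lam := by linarith
  have hlam0 : 0 < lam := by linarith
  have hℓ0 : 0 < ℓ := by
    by_contra! hcon
    have h0 : 0 ≤ ℓ := Real.log_natCast_nonneg n
    have : lam = 0 := by rw [hlamdef, le_antisymm hcon h0, Real.log_zero]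
    linarith
  have hℓexp : ℓ = Real.exp lam := (Real.exp_log hℓ0).symm
  have hn0 : 0 < n := by
    rcases Nat.eq_zero_or_pos n with rfl | h
    · simp [hℓ] at hℓ0
    · exact h
  have hn' : (0 : ℝ) < n := by exact_mod_cast hn0
  have hnexp : (n : ℝ) = Real.exp ℓ := (Real.exp_log hn').symm
  have hlamℓ : lam ≤ ℓ := by rw [hℓexp]; linarith [Real.add_one_le_exp lam]
  have hℓn : ℓ ^ 3 / 6 ≤ n := by
    rw [hnexp]
    simpa [Nat.factorial] using Real.pow_div_factorial_le_exp ℓ hℓ0.le 3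
  have hℓ2n : 2 * ℓ ≤ n := by
    have h1 : (416 : ℝ) ^ 2 ≤ ℓ ^ 2 := by gcongr; linarith
    calc 2 * ℓ = ℓ * 12 / 6 := by ring
      _ ≤ ℓ * ℓ ^ 2 / 6 := by gcongr; linarith
      _ = ℓ ^ 3 / 6 := by ring
      _ ≤ n := hℓn
  have hr1 : 1 ≤ ℓ / lam := by rwa [one_le_div hlam0]
  have hm' : 10 ^ 6 * C * (n * (ℓ / lam)) ≤ m := by
    refine le_trans ?_ hm
    have hβα : 1 ≤ β / α := by rw [one_le_div hα]; linarith
    calc 10 ^ 6 * C * (n * (ℓ / lam)) = 1 * (10 ^ 6 * C * (n * (ℓ / lam))) := by ring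
      _ ≤ β / α * (10 ^ 6 * C * (n * (ℓ / lam))) := by gcongr
      _ = _ := by ring
  set b := ⌈8 * (ℓ / lam)⌉₊ with hb
  have hb1 : 8 * (ℓ / lam) ≤ b := Nat.le_ceil _
  have hb2 : (b : ℝ) ≤ 16 * (ℓ / lam) := by
    have := Nat.ceil_lt_add_one (show 0 ≤ 8 * (ℓ / lam) by positivity)
    linarith
  have hb0 : (0 : ℝ) < b := by linarith
  have hb1' : 1 ≤ b := by exact_mod_cast hb0
  set L := ⌈ℓ⌉₊ with hL
  have hL1 : ℓ ≤ L := Nat.le_ceil _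
  have hL2 : (L : ℝ) ≤ ℓ + 1 := (Nat.ceil_lt_add_one hℓ0.le).le
  set Q := ⌊C * ((2 * b : ℕ) : ℝ)⌋₊ with hQ
  have hQ1 : (Q : ℝ) ≤ C * ((2 * b : ℕ) : ℝ) := Nat.floor_le (by positivity)
  have hQ2 : C * ((2 * b : ℕ) : ℝ) < Q + 1 := Nat.lt_floor_add_one _
  have hQ3 : (Q : ℝ) ≤ 32 * C * (ℓ / lam) := by
    calc (Q : ℝ) ≤ C * (2 * b) := by push_cast at hQ1; exact hQ1
      _ ≤ C * (2 * (16 * (ℓ / lam))) := by gcongr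
      _ = _ := by ring
  have hmpos : 0 < C * (n * (ℓ / lam)) := by positivity
  have hQm : (n : ℝ) * Q ≤ 32 * (C * (n * (ℓ / lam))) := by
    calc (n : ℝ) * Q ≤ n * (32 * C * (ℓ / lam)) := by gcongr
      _ = _ := by ring
  have hm0 : (0 : ℝ) < m := by linarith
  have hb1'' : (1 : ℝ) ≤ b := by exact_mod_cast hb1'
  have hδ : (2 : ℝ) / b ≤ 2 := div_le_self (by norm_num) hb1''
  have hLn : L ≤ n := by
    have : (L : ℝ) ≤ n := by linarith
    exact_mod_cast this
  have hmain := le_utilMeasure_isWEF (R := 2 * b) (b := b) (Q := Q) (L := L) (δ := 2 / b) hα hD hw hwC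
    (m := m) (by positivity) hδ (by push_cast; field_simp; linarith) (by omega)
    (by linarith) (by
      have : (n : ℝ) * Q < m := by linarith
      exact_mod_cast this) (by
      refine Nat.floor_pos.2 (one_le_mul_of_one_le_of_one_le hC ?_)
      push_cast
      linarith) (by
      have h1 : (4 : ℝ) * Q ≤ L := by
        have : 128 * C * (ℓ / lam) ≤ ℓ := by
          rw [← mul_div_assoc, div_le_iff₀ hlam0, mul_comm ℓ]
          gcongr
        linarith
      exact_mod_cast h1) (by
      have he := Real.exp_one_lt_d9
      have he3 : Real.exp 1 ^ 3 ≤ 21 := by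
        calc Real.exp 1 ^ 3 ≤ (2.72 : ℝ) ^ 3 := by
              have := Real.exp_pos 1
              gcongr
              linarith
          _ ≤ 21 := by norm_num
      have hfrac : (Q * n / m : ℝ) ≤ 32 / 10 ^ 6 := by
        rw [div_le_div_iff₀ hm0 (by norm_num)]
        linarith
      calc 5 * Real.exp 1 ^ 3 * (Q * n / m : ℝ) ≤ 5 * 21 * (32 / 10 ^ 6) := by gcongr
        _ ≤ 1 / 64 := by norm_num)
  refine le_trans (ENNReal.ofReal_le_ofReal ?_) hmain
  have h₁ := mul_two_mul_one_eighth_pow_le hn0 hL1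
  have h₂ : (n : ℝ) * (L * (1 - α * (2 / b / 2)) ^ (m / L)) ≤ 1 / n := by
    have hq : α * (2 / b / 2) = α / b := by field_simp
    rw [hq]
    refine mul_mul_one_sub_pow_le hn0 hLn ?_ ?_
    · rw [div_le_one hb0]
      exact hα1.trans hb1''
    · exact three_mul_le_div_mul hα hC hlam0 hlamα hlamℓ hb0 hb2 (by linarith) (by linarith)
        (by linarith) hℓn hm'
  have h₃ : (n : ℝ) * (n * (2 ^ L * (β * (2 / b)) ^ b)) ≤ 2 / n := by
    refine mul_mul_two_pow_mul_pow_le (c := lam / 2) hn0 hL2 (by positivity) ?_ ?_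
    · exact mul_two_div_le_exp_neg hβ hlam0 hlamβ (hℓexp ▸ hb1)
    · calc 4 * ℓ = lam / 2 * (8 * (ℓ / lam)) := by field_simp; norm_num
        _ ≤ lam / 2 * b := by gcongr
  have hsum : (5 : ℝ) / n = 2 / n + 1 / n + 2 / n := by ring
  linarith
end

section
/- Suppose there are two agents with weights w_1 and w_2 = r*w_1 where r >= 1, and let D be a PDF-bounded distribution on [0,1]. For any function m = m(r) of positive integers with m(r)/sqrt(r) tending to infinity as r tends to infinity, when the 2m utilities are drawn independently from D, the probability that a weighted envy-free (WEF) allocation exists tends to 1 as r tends to infinity; the same holds for weighted proportional (WPROP) allocations. -/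
open Finset MeasureTheory
open scoped ENNReal

open Filter ProbabilityTheory

/-- Chebyshev lower-tail bound: among `m > 0` independent events of probability `p > 0`, fewer
than `m * p / 2` occur with probability at most `4 / (m * p)`. -/
lemma measure_sum_indicator_lt_half_le {Ω : Type*} [MeasurableSpace Ω] {μ : Measure Ω}
    [IsProbabilityMeasure μ] {m : ℕ} (hm : 0 < m) {G : Fin m → Set Ω}
    (hG : ∀ i, MeasurableSet (G i)) (hind : iIndepSet G μ) {p : ℝ} (hp : 0 < p)
    (hGp : ∀ i, μ.real (G i) = p) :
    μ {ω | ∑ i, (G i).indicator (fun _ => (1 : ℝ)) ω < m * p / 2} ≤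
      ENNReal.ofReal (4 / (m * p)) := by
  have hm' : (0 : ℝ) < m := by exact_mod_cast hm
  set X : Fin m → Ω → ℝ := fun i => (G i).indicator (fun _ => (1 : ℝ)) with hX
  have hLp (i : Fin m) : MemLp (X i) 2 μ :=
    memLp_indicator_const 2 (hG i) 1 (Or.inr (measure_ne_top _ _))
  have hint (i : Fin m) : ∫ ω, X i ω ∂μ = p := by
    rw [hX, integral_indicator_const _ (hG i), hGp]; simp
  have hvar (i : Fin m) : variance (X i) μ ≤ p := by
    refine (variance_le_expectation_sq (hLp i).aestronglyMeasurable).trans ?_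
    refine le_of_eq ?_
    rw [← hint i]
    congr 1
    ext ω
    by_cases h : ω ∈ G i <;> simp [hX, h]
  have hsum : variance (∑ i, X i) μ ≤ m * p := by
    rw [IndepFun.variance_sum (fun i _ => hLp i)
      (fun i _ j _ hij => hind.iIndepFun_indicator.indepFun hij)]
    calc ∑ i, variance (X i) μ ≤ ∑ _i : Fin m, p := sum_le_sum fun i _ => hvar i
      _ = m * p := by simp
  have hmean : ∫ ω, (∑ i, X i) ω ∂μ = m * p := by
    simp only [Finset.sum_apply]
    rw [integral_finsetSum _ fun i _ => (hLp i).integrable (by norm_num)]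
    simp [hint]
  have hLpS : MemLp (∑ i, X i) 2 μ := memLp_finsetSum' _ fun i _ => hLp i
  have hmp : 0 < m * p := by positivity
  have hcheb := meas_ge_le_variance_div_sq hLpS (c := m * p / 2) (by positivity)
  rw [hmean] at hcheb
  refine (measure_mono ?_).trans (hcheb.trans (ENNReal.ofReal_le_ofReal ?_))
  · intro ω hω
    simp only [Set.mem_ofPred_eq] at hω ⊢
    rw [Finset.sum_apply, abs_sub_comm]
    exact le_trans (by linarith) (le_abs_self _)
  · rw [div_le_div_iff₀ (by positivity) (by positivity)]
    nlinarith [mul_le_mul_of_nonneg_right hsum hmp.le]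

instance isProbabilityMeasure_utilMeasure (n m : ℕ) (D : Measure ℝ) [IsProbabilityMeasure D] :
    IsProbabilityMeasure (utilMeasure n m D) := by
  unfold utilMeasure; infer_instance

lemma utilMeasure_biInter {n m : ℕ} (D : Measure ℝ) [IsProbabilityMeasure D]
    (S : Fin n → Set ℝ) (T : Finset (Fin m)) :
    utilMeasure n m D (⋂ g ∈ T, {u | ∀ i, u i g ∈ S i}) = (∏ i, D (S i)) ^ #T := by
  classical
  have : (⋂ g ∈ T, {u : Fin n → Fin m → ℝ | ∀ i, u i g ∈ S i}) =
      Set.pi Set.univ fun i => Set.pi Set.univ fun g => if g ∈ T then S i else Set.univ := by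
    ext u
    simp only [Set.mem_iInter, Set.mem_ofPred_eq, Set.mem_pi, Set.mem_univ, true_imp_iff]
    constructor
    · intro h i g
      split_ifs with hg
      · exact h g hg i
      · trivial
    · intro h g hg i
      simpa [hg] using h i g
  rw [this, utilMeasure, Measure.pi_pi, ← Finset.prod_pow]
  refine prod_congr rfl fun i _ => ?_
  rw [Measure.pi_pi]
  simp only [apply_ite D, measure_univ]
  rw [prod_ite_mem, univ_inter, prod_const]

lemma utilMeasure_item {n m : ℕ} (D : Measure ℝ) [IsProbabilityMeasure D]
    (S : Fin n → Set ℝ) (g : Fin m) :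
    utilMeasure n m D {u | ∀ i, u i g ∈ S i} = ∏ i, D (S i) := by
  simpa using utilMeasure_biInter D S {g}

lemma measurableSet_item {n m : ℕ} {S : Fin n → Set ℝ} (hS : ∀ i, MeasurableSet (S i))
    (g : Fin m) : MeasurableSet {u : Fin n → Fin m → ℝ | ∀ i, u i g ∈ S i} := by
  rw [Set.ofPred_forall]
  exact MeasurableSet.iInter fun i =>
    ((measurable_pi_apply g).comp (measurable_pi_apply i)) (hS i)

/-- The number of items whose utilities fall in a given box is rarely below half its mean. -/
lemma utilMeasure_card_lt_half_le {n m : ℕ} (hm : 0 < m) (D : Measure ℝ) [IsProbabilityMeasure D]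
    {S : Fin n → Set ℝ} (hS : ∀ i, MeasurableSet (S i)) {p : ℝ} (hp : 0 < p)
    (hSp : p ≤ ∏ i, D.real (S i)) [∀ (u : Fin n → Fin m → ℝ) g, Decidable (∀ i, u i g ∈ S i)] :
    utilMeasure n m D {u | (#{g | ∀ i, u i g ∈ S i} : ℝ) < m * p / 2} ≤
      ENNReal.ofReal (4 / (m * p)) := by
  have hm' : (0 : ℝ) < m := by exact_mod_cast hm
  have hind : iIndepSet (fun g : Fin m => {u : Fin n → Fin m → ℝ | ∀ i, u i g ∈ S i})
      (utilMeasure n m D) := by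
    rw [iIndepSet_iff_meas_biInter (measurableSet_item hS)]
    intro T
    rw [utilMeasure_biInter, prod_congr rfl fun g _ => utilMeasure_item D S g, prod_const]
  have h := measure_sum_indicator_lt_half_le hm (measurableSet_item hS) hind
    (hp.trans_le hSp) fun g => by
      rw [Measure.real, utilMeasure_item, ENNReal.toReal_prod]; rfl
  refine (measure_mono ?_).trans (h.trans (ENNReal.ofReal_le_ofReal ?_))
  · intro u hu
    simp only [Set.mem_ofPred_eq] at hu ⊢
    have : ∑ g : Fin m, Set.indicator {u : Fin n → Fin m → ℝ | ∀ i, u i g ∈ S i}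
        (fun _ => (1 : ℝ)) u = #{g | ∀ i, u i g ∈ S i} := by
      simp [Set.indicator_apply, Finset.sum_boole]
    rw [this]
    exact hu.trans_le (by gcongr)
  · gcongr

lemma PDFBounded.le_real_Icc {α β : ℝ} {D : Measure ℝ} [IsProbabilityMeasure D] (hα : 0 ≤ α)
    (hD : PDFBounded α β D) {a b : ℝ} (ha : 0 ≤ a) (hb : b ≤ 1) :
    α * (b - a) ≤ D.real (Set.Icc a b) := by
  obtain ⟨f, hf, hfb⟩ := hD
  have hsub : Set.Icc a b ⊆ Set.Icc (0 : ℝ) 1 := Set.Icc_subset_Icc ha hb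
  rw [Measure.real, ← ENNReal.ofReal_le_iff_le_toReal (measure_ne_top _ _), hf,
    withDensity_apply _ measurableSet_Icc, Measure.restrict_restrict measurableSet_Icc,
    Set.inter_eq_left.2 hsub]
  calc ENNReal.ofReal (α * (b - a)) = ∫⁻ _ in Set.Icc a b, ENNReal.ofReal α := by
        rw [setLIntegral_const, Real.volume_Icc, ENNReal.ofReal_mul hα]
    _ ≤ _ := setLIntegral_mono' measurableSet_Icc fun x hx => (hfb x (hsub hx)).1

lemma PDFBounded.apply_Icc_zero_one {α β : ℝ} {D : Measure ℝ} [IsProbabilityMeasure D]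
    (hD : PDFBounded α β D) : D (Set.Icc 0 1) = 1 := by
  obtain ⟨f, hf, -⟩ := hD
  rw [← measure_univ (μ := D), hf, withDensity_apply _ measurableSet_Icc,
    withDensity_apply _ MeasurableSet.univ, Measure.restrict_restrict measurableSet_Icc,
    Set.inter_self, Measure.restrict_univ]

lemma PDFBounded.utilMeasure_mem_Icc {α β : ℝ} {D : Measure ℝ} [IsProbabilityMeasure D]
    (hD : PDFBounded α β D) (n m : ℕ) :
    utilMeasure n m D {u | ∀ i g, u i g ∈ Set.Icc (0 : ℝ) 1}ᶜ = 0 := by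
  have hset : {u : Fin n → Fin m → ℝ | ∀ i g, u i g ∈ Set.Icc (0 : ℝ) 1} =
      ⋂ g ∈ (univ : Finset (Fin m)), {u | ∀ i, u i g ∈ Set.Icc (0 : ℝ) 1} := by
    ext u
    simp only [Set.mem_ofPred_eq, Set.mem_iInter, mem_univ, true_imp_iff]
    exact forall_comm
  have hmeas : MeasurableSet {u : Fin n → Fin m → ℝ | ∀ i g, u i g ∈ Set.Icc (0 : ℝ) 1} := by
    rw [hset]
    exact Finset.measurableSet_biInter _ fun g _ =>
      measurableSet_item (fun _ => measurableSet_Icc) g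
  rw [prob_compl_eq_zero_iff hmeas, hset, utilMeasure_biInter D fun _ => Set.Icc (0 : ℝ) 1]
  simp [hD.apply_Icc_zero_one]

/-- For two agents, giving agent `0` the bundle `B` and agent `1` the rest is both WEF and WPROP
as soon as it meets the two proportionality thresholds. -/
lemma exists_allocation_of_bundle {m : ℕ} {w1 r : ℝ} (hw1 : 0 < w1) (hr : 0 < r)
    {u : Fin 2 → Fin m → ℝ} (B : Finset (Fin m))
    (h0 : ∑ g, u 0 g ≤ (1 + r) * ∑ g ∈ B, u 0 g)
    (h1 : (1 + r) * ∑ g ∈ B, u 1 g ≤ ∑ g, u 1 g) :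
    ∃ A : Fin 2 → Finset (Fin m), IsAllocation A ∧ IsWEF ![w1, r * w1] u A ∧
      IsWPROP ![w1, r * w1] u A := by
  classical
  have hs (i : Fin 2) := Finset.sum_add_sum_compl B (u i)
  have hs0 := hs 0
  have hs1 := hs 1
  refine ⟨![B, Bᶜ], fun g => ?_, ?_, ?_⟩
  · by_cases hg : g ∈ B
    · exact ⟨0, by simpa using hg, fun i hi => by fin_cases i <;> simp_all⟩
    · exact ⟨1, by simpa using hg, fun i hi => by fin_cases i <;> simp_all⟩
  · rw [IsWEF, Fin.forall_fin_two]
    constructor <;> rw [Fin.forall_fin_two] <;> refine ⟨?_, ?_⟩ <;>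
      simp only [Matrix.cons_val_zero, Matrix.cons_val_one]
    · exact le_rfl
    · rw [div_le_div_iff₀ (by positivity) hw1]
      nlinarith
    · rw [div_le_div_iff₀ hw1 (by positivity)]
      nlinarith
    · exact le_rfl
  · rw [IsWPROP, Fin.forall_fin_two]
    have hW : w1 + r * w1 = (1 + r) * w1 := by ring
    simp only [Fin.sum_univ_two, Matrix.cons_val_zero, Matrix.cons_val_one, hW]
    constructor
    · rw [div_mul_eq_mul_div, div_le_iff₀ (by positivity)]
      nlinarith
    · rw [div_mul_eq_mul_div, div_le_iff₀ (by positivity), eq_sub_of_add_eq' hs1]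
      nlinarith

/-- A bundle of `⌈2x⌉` items, `x = m / (1 + r)`, that agent `0` values at least `1/2` and agent
`1` values at most `c * x / (2 * x + 1)`, meets both thresholds once agent `1` values all items
together at least `c * m`. -/
lemma exists_allocation_of_card {m : ℕ} (hm : 0 < m) {w1 r c : ℝ} (hw1 : 0 < w1) (hr : 0 < r)
    (hc : 0 < c) {x : ℝ} (hx : x = m / (1 + r)) {u : Fin 2 → Fin m → ℝ}
    (hu : ∀ g, u 0 g ≤ 1) (hM : c * m ≤ ∑ g, u 1 g) {N : Finset (Fin m)}
    (hN : 2 * x + 1 ≤ #N) (hN0 : ∀ g ∈ N, 1 / 2 ≤ u 0 g)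
    (hN1 : ∀ g ∈ N, u 1 g ≤ c * x / (2 * x + 1)) :
    ∃ A : Fin 2 → Finset (Fin m), IsAllocation A ∧ IsWEF ![w1, r * w1] u A ∧
      IsWPROP ![w1, r * w1] u A := by
  have hm' : (0 : ℝ) < m := by exact_mod_cast hm
  have hx0 : 0 < x := by rw [hx]; positivity
  have hxr : (1 + r) * x = m := by rw [hx]; field_simp
  have hk1 : (⌈2 * x⌉₊ : ℝ) ≤ 2 * x + 1 := (Nat.ceil_lt_add_one (by positivity)).le
  have hk0 : 2 * x ≤ ⌈2 * x⌉₊ := Nat.le_ceil _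
  obtain ⟨B, hBN, hB⟩ := Finset.exists_subset_card_eq (s := N) (n := ⌈2 * x⌉₊)
    (by exact_mod_cast hk1.trans hN)
  refine exists_allocation_of_bundle hw1 hr B ?_ ?_
  · have hB0 : (⌈2 * x⌉₊ : ℝ) * (1 / 2) ≤ ∑ g ∈ B, u 0 g := by
      rw [← hB, ← nsmul_eq_mul]
      exact Finset.card_nsmul_le_sum _ _ _ fun g hg => hN0 g (hBN hg)
    calc ∑ g, u 0 g ≤ ∑ _g : Fin m, (1 : ℝ) := sum_le_sum fun g _ => hu g
      _ = (1 + r) * x := by simp [hxr]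
      _ ≤ _ := by gcongr; linarith
  · have hB1 : ∑ g ∈ B, u 1 g ≤ (⌈2 * x⌉₊ : ℝ) * (c * x / (2 * x + 1)) := by
      rw [← hB, ← nsmul_eq_mul]
      exact Finset.sum_le_card_nsmul _ _ _ fun g hg => hN1 g (hBN hg)
    calc (1 + r) * ∑ g ∈ B, u 1 g
        ≤ (1 + r) * ((2 * x + 1) * (c * x / (2 * x + 1))) := by
          gcongr
          exact hB1.trans (by gcongr)
      _ = c * m := by rw [← hxr]; field_simp
      _ ≤ _ := hM

/-- The failure probability is controlled by `(2x+1)² / (m x)` with `x = m / (1 + r)`. -/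
lemma one_le_utilMeasure_add {α β : ℝ} {D : Measure ℝ} [IsProbabilityMeasure D] (hα : 0 < α)
    (hD : PDFBounded α β D) {m : ℕ} (hm : 0 < m) {w1 r x Z : ℝ} (hw1 : 0 < w1) (hr : 0 < r)
    (hx : x = m / (1 + r)) (hZ : Z = (2 * x + 1) ^ 2 / (m * x)) (hZα : Z ≤ α ^ 3 / 64) :
    1 ≤ utilMeasure 2 m D {u | ∃ A : Fin 2 → Finset (Fin m), IsAllocation A ∧
        IsWEF ![w1, r * w1] u A ∧ IsWPROP ![w1, r * w1] u A} +
      ENNReal.ofReal ((128 / α ^ 3 + 8 / α) * Z) := by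
  classical
  have hm' : (0 : ℝ) < m := by exact_mod_cast hm
  have hx0 : 0 < x := by rw [hx]; positivity
  have hα1 : α ≤ 1 := by
    simpa using (hD.le_real_Icc hα.le le_rfl le_rfl).trans measureReal_le_one
  set b : ℝ := α / 8 * x / (2 * x + 1) with hb
  have hb0 : 0 < b := by positivity
  have hb1 : b ≤ 1 := by
    rw [hb, div_le_one (by positivity)]
    nlinarith
  have hhalf : α / 2 ≤ D.real (Set.Icc (1 / 2) 1) := by
    have := hD.le_real_Icc hα.le (a := 1 / 2) (b := 1) (by norm_num) le_rfl
    linarith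
  have hlow : α * b ≤ D.real (Set.Icc 0 b) := by
    simpa using hD.le_real_Icc hα.le le_rfl hb1
  have hgood := utilMeasure_card_lt_half_le hm D
    (S := ![Set.Icc (1 / 2) 1, Set.Icc 0 b])
    (by rw [Fin.forall_fin_two]; exact ⟨measurableSet_Icc, measurableSet_Icc⟩)
    (p := α / 2 * (α * b)) (by positivity)
    (by
      simp only [Fin.prod_univ_two, Matrix.cons_val_zero, Matrix.cons_val_one]
      gcongr)
  have hhigh := utilMeasure_card_lt_half_le hm D
    (S := ![Set.univ, Set.Icc (1 / 2) 1])
    (by rw [Fin.forall_fin_two]; exact ⟨MeasurableSet.univ, measurableSet_Icc⟩)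
    (p := α / 2) (by positivity)
    (by simpa [Fin.prod_univ_two] using hhalf)
  have hnull := hD.utilMeasure_mem_Icc 2 m
  set E := {u : Fin 2 → Fin m → ℝ | ∃ A : Fin 2 → Finset (Fin m), IsAllocation A ∧
        IsWEF ![w1, r * w1] u A ∧ IsWPROP ![w1, r * w1] u A}
  set V₁ := {u : Fin 2 → Fin m → ℝ |
    (#{g | ∀ i, u i g ∈ (![Set.Icc (1 / 2) 1, Set.Icc 0 b] : Fin 2 → Set ℝ) i} : ℝ) <
      m * (α / 2 * (α * b)) / 2} with hV₁
  set V₂ := {u : Fin 2 → Fin m → ℝ |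
    (#{g | ∀ i, u i g ∈ (![Set.univ, Set.Icc (1 / 2) 1] : Fin 2 → Set ℝ) i} : ℝ) <
      m * (α / 2) / 2} with hV₂
  set V₃ := {u : Fin 2 → Fin m → ℝ | ∀ i g, u i g ∈ Set.Icc (0 : ℝ) 1}ᶜ with hV₃
  have hZpos : 0 < Z := by rw [hZ]; positivity
  have hZm : Z * (m * x) = (2 * x + 1) ^ 2 := by rw [hZ]; field_simp
  have hbx : b * (2 * x + 1) = α / 8 * x := by rw [hb]; field_simp
  have hmp : m * (α / 2 * (α * b)) * (2 * x + 1) = α ^ 3 / 16 * (m * x) := by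
    linear_combination m * (α / 2 * α) * hbx
  have hcover : Set.univ ⊆ E ∪ (V₁ ∪ V₂ ∪ V₃) := by
    intro u _
    by_contra hcon
    simp only [Set.mem_union, not_or] at hcon
    obtain ⟨hEu, ⟨h1, h2⟩, h3⟩ := hcon
    apply hEu
    simp only [hV₁, Set.mem_ofPred_eq, not_lt] at h1
    simp only [hV₂, Set.mem_ofPred_eq, not_lt] at h2
    simp only [hV₃, Set.mem_compl_iff, not_not, Set.mem_ofPred_eq] at h3
    refine exists_allocation_of_card hm hw1 hr (c := α / 8) (by positivity) hx
      (fun g => (h3 0 g).2) ?_ (le_trans ?_ h1) ?_ ?_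
    · calc α / 8 * m = m * (α / 2) / 2 * (1 / 2) := by ring
        _ ≤ (#{g | ∀ i, u i g ∈ (![Set.univ, Set.Icc (1 / 2) 1] : Fin 2 → Set ℝ) i} : ℝ) *
            (1 / 2) := by gcongr
        _ ≤ ∑ g with ∀ i, u i g ∈ (![Set.univ, Set.Icc (1 / 2) 1] : Fin 2 → Set ℝ) i, u 1 g := by
            rw [← nsmul_eq_mul]
            refine Finset.card_nsmul_le_sum _ _ _ fun g hg => ?_
            exact ((Finset.mem_filter.1 hg).2 1).1
        _ ≤ ∑ g, u 1 g :=
            sum_le_sum_of_subset_of_nonneg (filter_subset _ _) fun g _ _ => (h3 1 g).1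
    · refine le_of_mul_le_mul_right ?_ (show 0 < 2 * x + 1 by positivity)
      have := mul_le_mul_of_nonneg_right hZα (show 0 ≤ m * x by positivity)
      nlinarith
    · intro g hg
      exact ((Finset.mem_filter.1 hg).2 0).1
    · intro g hg
      exact ((Finset.mem_filter.1 hg).2 1).2
  have hbad₁ : 4 / (m * (α / 2 * (α * b))) ≤ 128 / α ^ 3 * Z := by
    rw [div_mul_eq_mul_div 128, div_le_div_iff₀ (by positivity) (by positivity)]
    refine le_of_mul_le_mul_right ?_ (show 0 < 2 * x + 1 by positivity)
    calc 4 * α ^ 3 * (2 * x + 1) ≤ 8 * α ^ 3 * (2 * x + 1) ^ 2 := by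
          have : 0 < α ^ 3 := by positivity
          nlinarith [mul_pos this hx0, mul_pos (mul_pos this hx0) hx0]
      _ = 128 * Z * (m * (α / 2 * (α * b)) * (2 * x + 1)) := by rw [hmp, ← hZm]; ring
      _ = _ := by ring
  have hbad₂ : 4 / (m * (α / 2)) ≤ 8 / α * Z := by
    rw [div_mul_eq_mul_div 8, div_le_div_iff₀ (by positivity) (by positivity)]
    refine le_of_mul_le_mul_right ?_ hx0
    calc 4 * α * x ≤ 4 * α * (2 * x + 1) ^ 2 := by gcongr; nlinarith
      _ = 8 * Z * (m * (α / 2)) * x := by rw [← hZm]; ring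
  calc (1 : ℝ≥0∞) = utilMeasure 2 m D Set.univ := measure_univ.symm
    _ ≤ utilMeasure 2 m D (E ∪ (V₁ ∪ V₂ ∪ V₃)) := measure_mono hcover
    _ ≤ utilMeasure 2 m D E + (utilMeasure 2 m D V₁ + utilMeasure 2 m D V₂ +
          utilMeasure 2 m D V₃) :=
        (measure_union_le _ _).trans (add_le_add le_rfl ((measure_union_le _ _).trans
          (add_le_add (measure_union_le _ _) le_rfl)))
    _ ≤ utilMeasure 2 m D E + ENNReal.ofReal ((128 / α ^ 3 + 8 / α) * Z) := by
        rw [hnull, add_zero, add_mul, ENNReal.ofReal_add (by positivity) (by positivity)]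
        gcongr
        · exact hgood.trans (ENNReal.ofReal_le_ofReal hbad₁)
        · exact hhigh.trans (ENNReal.ofReal_le_ofReal hbad₂)

lemma tendsto_sq_div_mul_zero {m : ℝ → ℕ} (hm : ∀ r, 0 < m r)
    (hgrow : Tendsto (fun r : ℝ => (m r : ℝ) / √r) atTop atTop) :
    Tendsto (fun r : ℝ => (2 * (m r / (1 + r)) + 1) ^ 2 / (m r * (m r / (1 + r)) : ℝ))
      atTop (nhds 0) := by
  have hlim : Tendsto (fun r : ℝ => 8 * r⁻¹ + 4 * (((m r : ℝ) / √r)⁻¹) ^ 2)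
      atTop (nhds 0) := by
    simpa using (tendsto_inv_atTop_zero.const_mul (8 : ℝ)).add
      ((hgrow.inv_tendsto_atTop.pow 2).const_mul 4)
  refine squeeze_zero' ?_ ?_ hlim
  · filter_upwards [eventually_ge_atTop 1] with r hr
    positivity
  · filter_upwards [eventually_ge_atTop 1] with r hr
    have hm' : (0 : ℝ) < m r := by exact_mod_cast hm r
    have hr0 : 0 < r := by linarith
    rw [inv_div, div_pow, Real.sq_sqrt hr0.le]
    calc (2 * (m r / (1 + r)) + 1) ^ 2 / (m r * (m r / (1 + r)) : ℝ)
        ≤ (8 * (m r / (1 + r)) ^ 2 + 2) / (m r * (m r / (1 + r)) : ℝ) := by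
          gcongr
          nlinarith [sq_nonneg (2 * ((m r : ℝ) / (1 + r)) - 1)]
      _ = 8 * (1 + r)⁻¹ + 2 * ((1 + r) / (m r : ℝ) ^ 2) := by field_simp
      _ ≤ 8 * r⁻¹ + 2 * (2 * r / (m r : ℝ) ^ 2) := by
          gcongr <;> linarith
      _ = _ := by ring

/-- Two agents with weights `w₁` and `w₂ = r·w₁` where `r ≥ 1`, and a PDF-bounded
distribution `D` on `[0,1]`.  For any function `m = m(r)` of positive integers with
`m(r)/√r → ∞`, when the `2m` utilities are drawn independently from `D`, the probability
that a WEF allocation exists tends to `1` as `r → ∞`; the same holds for WPROP. -/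
theorem two_agents_existence (D : Measure ℝ) [IsProbabilityMeasure D]
    (hD : ∃ α β : ℝ, 0 < α ∧ 0 < β ∧ PDFBounded α β D)
    (w1 : ℝ) (hw1 : 0 < w1)
    (m : ℝ → ℕ) (hm : ∀ r, 0 < m r)
    (hgrow : Filter.Tendsto (fun r : ℝ => (m r : ℝ) / Real.sqrt r)
      Filter.atTop Filter.atTop) :
    Filter.Tendsto
      (fun r : ℝ => utilMeasure 2 (m r) D
        {u | ∃ A : Fin 2 → Finset (Fin (m r)), IsAllocation A ∧ IsWEF ![w1, r * w1] u A})
      Filter.atTop (nhds 1) ∧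
    Filter.Tendsto
      (fun r : ℝ => utilMeasure 2 (m r) D
        {u | ∃ A : Fin 2 → Finset (Fin (m r)), IsAllocation A ∧ IsWPROP ![w1, r * w1] u A})
      Filter.atTop (nhds 1) := by
  obtain ⟨α, β, hα, -, hPDF⟩ := hD
  have hZ := tendsto_sq_div_mul_zero hm hgrow
  have hbound : Tendsto (fun r : ℝ => 1 - ENNReal.ofReal ((128 / α ^ 3 + 8 / α) *
      ((2 * (m r / (1 + r)) + 1) ^ 2 / (m r * (m r / (1 + r)) : ℝ)))) atTop (nhds 1) := by
    have h0 := ENNReal.tendsto_ofReal (hZ.const_mul (128 / α ^ 3 + 8 / α))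
    rw [mul_zero, ENNReal.ofReal_zero] at h0
    simpa using ENNReal.Tendsto.sub tendsto_const_nhds h0 (Or.inl ENNReal.one_ne_top)
  have hev : ∀ᶠ r : ℝ in atTop, 1 - ENNReal.ofReal ((128 / α ^ 3 + 8 / α) *
      ((2 * (m r / (1 + r)) + 1) ^ 2 / (m r * (m r / (1 + r)) : ℝ))) ≤
      utilMeasure 2 (m r) D {u | ∃ A : Fin 2 → Finset (Fin (m r)), IsAllocation A ∧
        IsWEF ![w1, r * w1] u A ∧ IsWPROP ![w1, r * w1] u A} := by
    filter_upwards [hZ.eventually_le_const (show (0 : ℝ) < α ^ 3 / 64 by positivity),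
      eventually_gt_atTop 0] with r hr hr0
    exact tsub_le_iff_right.2 (one_le_utilMeasure_add hα hPDF (hm r) hw1 hr0 rfl rfl hr)
  constructor
  · refine tendsto_of_tendsto_of_tendsto_of_le_of_le' hbound tendsto_const_nhds
      (hev.mono fun r hr => hr.trans (measure_mono ?_)) (Eventually.of_forall fun r => prob_le_one)
    rintro u ⟨A, hA, hWEF, -⟩
    exact ⟨A, hA, hWEF⟩
  · refine tendsto_of_tendsto_of_tendsto_of_le_of_le' hbound tendsto_const_nhds
      (hev.mono fun r hr => hr.trans (measure_mono ?_)) (Eventually.of_forall fun r => prob_le_one)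
    rintro u ⟨A, hA, -, hWPROP⟩
    exact ⟨A, hA, hWPROP⟩
end
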